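/- For all sufficiently large n, all x, x' ∈ G_n and all 1 ≤ r < R ≤ (c_0/6)·log_{d−1}(N_n) such that tx(B_{G_n}(x,2R)) = 0, tx(B_{G_n}(x',2R)) = 0 and B_{G_n}(x,2R) ∩ B_{G_n}(x',2R) = ∅, there exists a coupling Q_n of Ψ_{G_n} and φ_{T_d} such that for all ε > 0: Q_n[ sup_{y ∈ B_{G_n}(x,r) ∪ B_{G_n}(x',r)} |Ψ_{G_n}(y) − φ_{T_d}(ρ_{x,x',2R}(y))| > ε ] ≤ 8d(d−1)^r · exp( −(ε²(d−1)(d−2)/(24d²))·(d−1)^{R−2r} ). In particular, for a single x ∈ G_n with tx(B_{G_n}(x,2R)) = 0 there exists a coupling Q_n such that the same bound applies to Q_n[ sup_{y ∈ B_{G_n}(x,r)} |Ψ_{G_n}(y) − φ_{T_d}(ρ_{x,2R}(y))| > ε ]. -/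

import Mathlib

open MeasureTheory ProbabilityTheory Filter Set
open scoped ENNReal NNReal ENat Classical

namespace GFF

variable {V : Type*} {T : Type*}

/-- Number of ordered adjacent pairs inside `U` (twice the number of edges of the induced
subgraph). -/
noncomputable def adjPairs (G : SimpleGraph V) (U : Set V) : ℕ :=
  Set.ncard {p : V × V | p.1 ∈ U ∧ p.2 ∈ U ∧ G.Adj p.1 p.2}

/-- `U` (assumed connected) induces a tree, i.e. has tree excess zero. -/
def TxZero (G : SimpleGraph V) (U : Set V) : Prop :=
  adjPairs G U = 2 * (Set.ncard U - 1)

/-- Closed ball of radius `R` for the graph distance. -/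
def gball (G : SimpleGraph V) (x : V) (R : ℕ) : Set V := {y | G.dist x y ≤ R}

/-- Set of vertices within distance `R` of the set `A`. -/
def sball (G : SimpleGraph V) (A : Set V) (R : ℕ) : Set V := {y | ∃ a ∈ A, G.dist a y ≤ R}

/-- Connected component containing `x` of the level set `{ω ≥ h}`. -/
def levelComp (G : SimpleGraph V) (h : ℝ) (ω : V → ℝ) (x : V) : Set V :=
  {y | ∃ p : G.Walk x y, ∀ v ∈ p.support, h ≤ ω v}

/-- `G` is `d`-regular. -/
def IsReg (G : SimpleGraph V) (d : ℕ) : Prop := ∀ v, Nat.card (G.neighborSet v) = d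

/-- `G` is an infinite `d`-regular tree. -/
def IsRegTree (G : SimpleGraph V) (d : ℕ) : Prop :=
  G.Connected ∧ G.IsAcyclic ∧ IsReg G d

/-- Transition matrix of SRW on a `d`-regular graph. -/
noncomputable def transP [Fintype V] (G : SimpleGraph V) (d : ℕ) : Matrix V V ℝ :=
  Matrix.of fun u v => if G.Adj u v then ((d : ℝ))⁻¹ else 0

/-- All non-zero eigenvalues of `I - P` are at least `β`. -/
def SpectralGapLB [Fintype V] (G : SimpleGraph V) (d : ℕ) (β : ℝ) : Prop :=
  ∀ (f : V → ℝ) (lam : ℝ),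
    Matrix.mulVec ((1 : Matrix V V ℝ) - transP G d) f = lam • f → f ≠ 0 → lam = 0 ∨ β ≤ lam

/-- `P_x[X̄_t = y]` for the continuous-time SRW with i.i.d. mean-one exponential holding
times (Poissonized jump chain). -/
noncomputable def heatK [Fintype V] (G : SimpleGraph V) (d : ℕ) (t : ℝ) (x y : V) : ℝ :=
  ∑' k : ℕ, Real.exp (-t) * t ^ k / (Nat.factorial k) * ((transP G d) ^ k) x y

/-- The zero-average Green function. -/
noncomputable def zGreen [Fintype V] (G : SimpleGraph V) (d Nn : ℕ) (x y : V) : ℝ :=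
  ∫ t in Set.Ioi (0 : ℝ), (heatK G d t x y - 1 / (Nn : ℝ))

/-- Green function of SRW on the `d`-regular tree. -/
noncomputable def treeGreen (G : SimpleGraph V) (d : ℕ) (x y : V) : ℝ :=
  (((d : ℝ) - 1) / ((d : ℝ) - 2)) * (((d : ℝ) - 1)⁻¹) ^ (G.dist x y)

/-- `μ` is the law of the centred Gaussian field with covariance `K`. -/
def IsGaussianField {I : Type*} (μ : Measure (I → ℝ)) (K : I → I → ℝ) : Prop :=
  IsProbabilityMeasure μ ∧
    ∀ c : I →₀ ℝ,
      μ.map (fun ω => ∑ i ∈ c.support, c i * ω i) =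
        gaussianReal 0 (Real.toNNReal (∑ i ∈ c.support, ∑ j ∈ c.support, c i * c j * K i j))

/-- One-step transition probability of SRW. -/
noncomputable def srwStep (G : SimpleGraph V) (d : ℕ) (u v : V) : ℝ≥0∞ :=
  if G.Adj u v then (d : ℝ≥0∞)⁻¹ else 0

/-- `W x` is the law of discrete-time SRW on `G` started at `x`. -/
def IsSRW [MeasurableSpace V] (G : SimpleGraph V) (d : ℕ) (W : V → Measure (ℕ → V)) : Prop :=
  (∀ x, IsProbabilityMeasure (W x)) ∧
    ∀ (x : V) (k : ℕ) (p : ℕ → V),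
      W x {ω | ∀ i ≤ k, ω i = p i} =
        (if p 0 = x then 1 else 0) * ∏ i ∈ Finset.range k, srwStep G d (p i) (p (i + 1))

/-- Entrance time of the set `A` (`⊤` if never entered). -/
noncomputable def hitTime (A : Set V) (ω : ℕ → V) : ℕ∞ :=
  sInf ((Nat.cast : ℕ → ℕ∞) '' {k | ω k ∈ A})

/-- Exit time of the set `U`. -/
noncomputable def exitTime (U : Set V) (ω : ℕ → V) : ℕ∞ := hitTime Uᶜ ω

/-- Position of the walk at the entrance time of `A`. -/
noncomputable def stopAt (A : Set V) (ω : ℕ → V) : V := ω (hitTime A ω).toNat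

/-- `π` is a cover tree of `G` at `x`. -/
def IsCoverMap (Gt : SimpleGraph T) (G : SimpleGraph V) (o : T) (x : V) (π : T → V) : Prop :=
  π o = x ∧ Function.Surjective π ∧ ∀ y : T, π '' (Gt.neighborSet y) = G.neighborSet (π y)

/-- `T_d^+`: the vertices of the tree whose geodesic to `o` avoids the fixed neighbour
`obar` of `o`. -/
def treePlus (Gt : SimpleGraph T) (o obar : T) : Set T :=
  {z | Gt.dist z obar = Gt.dist z o + 1}

/-- `S^+_{T_d}(o,R)`. -/
def spherePlus (Gt : SimpleGraph T) (o obar : T) (R : ℕ) : Set T :=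
  {z | z ∈ treePlus Gt o obar ∧ Gt.dist o z = R}

/-- The critical value for level-set percolation on the tree (w.r.t. the law `μT`). -/
noncomputable def hstar (Gt : SimpleGraph T) (o : T) (μT : Measure (T → ℝ)) : ℝ :=
  sInf {h : ℝ | μT {ω | (levelComp Gt h ω o).Infinite} = 0}

/-- The forward percolation probability `η⁺(h)`. -/
noncomputable def etaPlus (Gt : SimpleGraph T) (o obar : T) (μT : Measure (T → ℝ)) (h : ℝ) :
    ℝ :=
  (μT {ω | (levelComp Gt h ω o ∩ treePlus Gt o obar).Infinite}).toReal

/-- `s_n`. -/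
noncomputable def sn (d Nn : ℕ) : ℕ :=
  max 1 ⌊(8 : ℝ) * Real.logb ((d : ℝ) - 1) (Real.logb ((d : ℝ) - 1) (Nn : ℝ))⌋₊

/-- `c₀ = αβ/(d-1)`. -/
noncomputable def c0 (d : ℕ) (α β : ℝ) : ℝ := α * β / ((d : ℝ) - 1)

/-- `r_n`. -/
noncomputable def rn (d : ℕ) (α β : ℝ) (Nn : ℕ) : ℕ :=
  max 1 ⌊(c0 d α β / 18) * Real.logb ((d : ℝ) - 1) (Nn : ℝ)⌋₊

/-- `R_n`. -/
noncomputable def Rn (d : ℕ) (α β : ℝ) (Nn : ℕ) : ℕ :=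
  max 1 ⌊(c0 d α β / 6) * Real.logb ((d : ℝ) - 1) (Nn : ℝ)⌋₊

/-- `F_A(x,s)`: the vertices of `B(A,s) ∖ A` connected to `x` within `B(A,s) ∖ A`. -/
def Fset (G : SimpleGraph V) (A : Set V) (s : ℕ) (x : V) : Set V :=
  {z | ∃ p : G.Walk x z, ∀ v ∈ p.support, v ∈ sball G A s ∧ v ∉ A}

/-- Good vertex at the boundary of `A`. -/
def GoodVertex (G : SimpleGraph V) (A : Set V) (s : ℕ) (x : V) : Prop :=
  x ∉ A ∧ (∃! y, y ∈ A ∧ G.Adj x y) ∧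
    TxZero G (Fset G A s x) ∧
    ∀ y : V, y ∉ A → (∃ a ∈ A, G.Adj y a) → y ≠ x →
      ∀ p : G.Walk y x, (∀ v ∈ p.support, v ∉ A) → ∃ v ∈ p.support, v ∉ sball G A s

end GFF

/-!
The covariances of the two fields nearly agree on the balls in question, and centred Gaussian
vectors with nearly equal covariances can be coupled closely.

Let `π` be the cover tree and `M + 1` the radius within which balls contain at most one cycle.
The Green function of the walk on the tree killed at distance `M + 1` from `z₀`, pushed forward
by `π`, solves `(I - P) g = δ_{π z₀} - ν` on the graph, where `ν` is the image of the uniform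
distribution on the sphere of radius `M + 1`. Because the ball contains at most one cycle, a
vertex has at most `2 k + 1` lifts at distance at most `k` from `z₀`: unroll the cycle into a
line, so that a lift is determined by its winding number. Hence `ν` has small `ℓ²` norm and the
spectral gap shows that `g` is close to the zero-average Green function. On the other hand `g`
is close to the tree Green function, since all lifts of a vertex except the chosen one are at
distance more than `2 R - r`.

If the entries of two covariance matrices `A` and `B` of size `n` differ by at most `δ`, then
driving both vectors by the same white noise through `√A` and `√B` makes the coordinates differ
by centred Gaussians of variance at most `n δ`, because `‖√A - √B‖² ≤ ‖A - B‖`. Gaussian tails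
and a union bound finish the proof, the remaining coordinates being added by conditioning.
-/

namespace GFF

/-! ### Lifts in a graph with at most one cycle -/

section GraphCoverings

variable {V W T : Type*}

/-- A graph homomorphism is locally injective if it is injective on the neighbours of each vertex.
This is the half of the covering property that keeps walks from backtracking. -/
def LocallyInjective {H : SimpleGraph V} {C : SimpleGraph W} (f : H →g C) : Prop :=
  ∀ v, InjOn f (H.neighborSet v)

namespace LocallyInjective

variable {H : SimpleGraph V} {C : SimpleGraph W} {f : H →g C}

lemma isChain_edges_map (hf : LocallyInjective f) {u v : V} (p : H.Walk u v)
    (hp : p.edges.IsChain (· ≠ ·)) : (p.map f).edges.IsChain (· ≠ ·) := by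
  induction p with
  | nil => simp
  | @cons a b c h p ih =>
    cases p with
    | nil => simp
    | @cons _ e _ h' q =>
      simp only [SimpleGraph.Walk.map_cons, SimpleGraph.Walk.edges_cons,
        List.isChain_cons_cons] at hp ih ⊢
      refine ⟨fun heq => hp.1 ?_, ih hp.2⟩
      have hfae : f a = f e := by
        rcases Sym2.eq_iff.mp heq with ⟨hab, hbe⟩ | ⟨hae, -⟩
        · exact hab.trans hbe
        · exact hae
      rw [hf b h.symm h' hfae, Sym2.eq_swap]

lemma isPath_map (hf : LocallyInjective f) (hC : C.IsAcyclic) {u v : V} {p : H.Walk u v}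
    (hp : p.IsTrail) : (p.map f).IsPath :=
  (hC.isPath_iff_isChain _).mpr (hf.isChain_edges_map p hp.edges_nodup.isChain)

lemma length_eq_zero (hf : LocallyInjective f) (hC : C.IsAcyclic) {u v : V} {p : H.Walk u v}
    (hp : p.IsTrail) (huv : f u = f v) : p.length = 0 := by
  rw [← SimpleGraph.Walk.length_map f]
  generalize p.map f = q, hf.isPath_map hC hp = hq
  revert q
  rw [huv]
  exact fun q hq => SimpleGraph.Walk.length_eq_zero_iff.mpr (SimpleGraph.Walk.isPath_iff_nil.mp hq)

lemma injective (hf : LocallyInjective f) (hH : H.Preconnected) (hC : C.IsAcyclic) :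
    Function.Injective f := fun u v huv =>
  have ⟨_, hp⟩ := (hH u v).exists_isPath
  SimpleGraph.Walk.eq_of_length_eq_zero (hf.length_eq_zero hC hp.isTrail huv)

lemma isAcyclic (hf : LocallyInjective f) (hC : C.IsAcyclic) : H.IsAcyclic := by
  intro v c hc
  have hzero := hf.length_eq_zero hC hc.isTrail rfl
  have hthree := hc.three_le_length
  omega

end LocallyInjective

/-- `π` maps the neighbours of each vertex of `Gt` onto the neighbours of its image; between
`d`-regular graphs this makes `π` a graph covering. -/
def IsCovering (Gt : SimpleGraph T) (G : SimpleGraph V) (π : T → V) : Prop :=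
  ∀ z, π '' Gt.neighborSet z = G.neighborSet (π z)

namespace IsCovering

variable {Gt : SimpleGraph T} {G : SimpleGraph V} {π : T → V}

lemma adj (hπ : IsCovering Gt G π) {u v : T} (h : Gt.Adj u v) : G.Adj (π u) (π v) :=
  (hπ u).subset (mem_image_of_mem π h)

lemma dist_le (hπ : IsCovering Gt G π) (hGt : Gt.Connected) (u v : T) :
    G.dist (π u) (π v) ≤ Gt.dist u v := by
  obtain ⟨p, hp⟩ := hGt.exists_walk_length_eq_dist u v
  rw [← hp, ← SimpleGraph.Walk.length_map (⟨π, hπ.adj⟩ : Gt →g G)]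
  exact SimpleGraph.dist_le _

lemma exists_walk_lift (hπ : IsCovering Gt G π) {u v : V} (p : G.Walk u v) {z : T}
    (hz : π z = u) : ∃ z', π z' = v ∧ ∃ q : Gt.Walk z z', q.length = p.length := by
  induction p generalizing z with
  | nil => exact ⟨z, hz, .nil, rfl⟩
  | @cons a b c h p ih =>
    obtain ⟨y, hzy, hy⟩ : b ∈ π '' Gt.neighborSet z := by rwa [hπ, hz]
    obtain ⟨z', hz', q, hq⟩ := ih hy
    exact ⟨z', hz', .cons hzy q, congrArg (· + 1) hq⟩

lemma exists_lift_dist_le (hπ : IsCovering Gt G π) (hG : G.Connected) (z : T) (v : V) :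
    ∃ z', π z' = v ∧ Gt.dist z z' ≤ G.dist (π z) v := by
  obtain ⟨p, hp⟩ := hG.exists_walk_length_eq_dist (π z) v
  obtain ⟨z', hz', q, hq⟩ := hπ.exists_walk_lift p rfl
  exact ⟨z', hz', (SimpleGraph.dist_le q).trans (hq.trans hp).le⟩

lemma injOn_neighborSet (hπ : IsCovering Gt G π) {d : ℕ} (hd : d ≠ 0) (hGt : IsReg Gt d)
    (hG : IsReg G d) (z : T) : InjOn π (Gt.neighborSet z) := by
  have hfin : (Gt.neighborSet z).Finite :=
    finite_of_ncard_ne_zero (by rwa [← Nat.card_coe_set_eq, hGt z])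
  rw [← ncard_image_iff hfin, hπ, ← Nat.card_coe_set_eq, ← Nat.card_coe_set_eq, hGt, hG]

end IsCovering

section Balls

variable {G : SimpleGraph V}

lemma mem_gball_self (x : V) (M : ℕ) : x ∈ gball G x M :=
  (SimpleGraph.dist_self (G := G) (v := x)).trans_le M.zero_le

lemma exists_adj_dist_eq_add_one (hG : G.Connected) {x y : V} (hxy : y ≠ x) :
    ∃ u, G.Adj y u ∧ G.dist x y = G.dist x u + 1 := by
  obtain ⟨p, hp⟩ := hG.exists_walk_length_eq_dist y x
  cases p with
  | nil => exact absurd rfl hxy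
  | @cons _ u _ hyu p =>
    refine ⟨u, hyu, le_antisymm ?_ ?_⟩
    · rcases hyu.symm.diff_dist_adj (u := x) with h | h | h <;> omega
    · rw [SimpleGraph.dist_comm (v := y), ← hp, SimpleGraph.dist_comm, SimpleGraph.Walk.length_cons]
      exact Nat.succ_le_succ (SimpleGraph.dist_le p)

lemma exists_walk_induce_gball (hG : G.Connected) (x : V) (M k : ℕ) {y : V} (hy : y ∈ gball G x M)
    (hk : G.dist x y = k) :
    ∃ p : (G.induce (gball G x M)).Walk ⟨y, hy⟩ ⟨x, mem_gball_self x M⟩, p.length = k := by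
  induction k generalizing y with
  | zero =>
    obtain rfl := hG.dist_eq_zero_iff.mp hk
    exact ⟨.nil, rfl⟩
  | succ k ih =>
    obtain ⟨u, hyu, hu⟩ := exists_adj_dist_eq_add_one hG (x := x) (y := y)
      (by rintro rfl; simp at hk)
    have huM : G.dist x u ≤ M := by have : G.dist x y ≤ M := hy; omega
    obtain ⟨p, hp⟩ := ih huM (by omega)
    have hadj : (G.induce (gball G x M)).Adj ⟨y, hy⟩ ⟨u, huM⟩ := hyu
    exact ⟨.cons hadj p, congrArg (· + 1) hp⟩

lemma connected_induce_gball (hG : G.Connected) (x : V) (M : ℕ) :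
    (G.induce (gball G x M)).Connected :=
  have : Nonempty (gball G x M) := ⟨x, mem_gball_self x M⟩
  have hx (y : gball G x M) : (G.induce (gball G x M)).Reachable y ⟨x, mem_gball_self x M⟩ :=
    have ⟨p, _⟩ := exists_walk_induce_gball hG x M _ y.2 rfl
    ⟨p⟩
  .mk fun u v => (hx u).trans (hx v).symm

lemma dist_induce_gball_le (hG : G.Connected) (x : V) (M : ℕ) (y : gball G x M) :
    (G.induce (gball G x M)).dist ⟨x, mem_gball_self x M⟩ y ≤ G.dist x y := by
  obtain ⟨p, hp⟩ := exists_walk_induce_gball hG x M _ y.2 rfl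
  rw [SimpleGraph.dist_comm, ← hp]
  exact SimpleGraph.dist_le p

lemma adjPairs_eq_two_mul_ncard_edgeSet [Finite V] (U : Set V) :
    adjPairs G U = 2 * (G.induce U).edgeSet.ncard := by
  have := Fintype.ofFinite V
  have hset : {p : V × V | p.1 ∈ U ∧ p.2 ∈ U ∧ G.Adj p.1 p.2} =
      range fun e : (G.induce U).Dart => ((e.fst : V), (e.snd : V)) := by
    ext ⟨u, v⟩
    constructor
    · rintro ⟨hu, hv, huv⟩
      exact ⟨⟨(⟨u, hu⟩, ⟨v, hv⟩), huv⟩, rfl⟩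
    · rintro ⟨e, he⟩
      obtain ⟨rfl, rfl⟩ := Prod.ext_iff.mp he
      exact ⟨e.fst.2, e.snd.2, e.adj⟩
  have hinj : Function.Injective fun e : (G.induce U).Dart => ((e.fst : V), (e.snd : V)) := by
    intro e e' h
    obtain ⟨hfst, hsnd⟩ := Prod.ext_iff.mp h
    exact SimpleGraph.Dart.ext _ _ (Prod.ext (Subtype.ext hfst) (Subtype.ext hsnd))
  rw [adjPairs, hset, ← Nat.card_coe_set_eq, Nat.card_range_of_injective hinj,
    Nat.card_eq_fintype_card, SimpleGraph.dart_card_eq_twice_card_edges, ncard_eq_toFinset_card',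
    SimpleGraph.edgeFinset]

end Balls

section UnicyclicGraphs

lemma exists_isAcyclic_le_sup_edge [Finite V] {K : SimpleGraph V} (hK : K.Connected)
    (hcard : K.edgeSet.ncard ≤ Nat.card V) :
    ∃ (F : SimpleGraph V) (a b : V), F.IsAcyclic ∧ K ≤ F ⊔ SimpleGraph.edge a b := by
  obtain ⟨F, hFK, hF⟩ := hK.exists_isTree_le
  have hone : (K.edgeSet \ F.edgeSet).ncard ≤ 1 := by
    have hF_card := (SimpleGraph.isTree_iff_connected_and_card.mp hF).2
    have hdiff := ncard_sdiff_add_ncard_of_subset (SimpleGraph.edgeSet_mono hFK)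
    rw [Nat.card_coe_set_eq] at hF_card
    omega
  have : Nonempty (Sym2 V) := have ⟨x⟩ := hK.nonempty; ⟨s(x, x)⟩
  obtain ⟨e, he⟩ := (ncard_le_one_iff_subset_singleton (toFinite _)).mp hone
  induction e with
  | h a b =>
    refine ⟨F, a, b, hF.isAcyclic, fun u v huv => or_iff_not_imp_left.mpr fun hFuv => ?_⟩
    rw [SimpleGraph.adj_edge]
    exact ⟨(he ⟨huv, hFuv⟩).symm, huv.ne⟩

/-- The signed number of times that the step from `u` to `v` crosses the oriented edge from `a`
to `b`. -/
noncomputable def crossing (a b u v : V) : ℤ :=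
  (if u = a ∧ v = b then 1 else 0) - if v = a ∧ u = b then 1 else 0

lemma crossing_swap (a b u v : V) : crossing a b v u = -crossing a b u v := by
  simp only [crossing, neg_sub]

lemma abs_crossing_le_one (a b u v : V) : |crossing a b u v| ≤ 1 := by
  unfold crossing
  split_ifs <;> simp

/-- The infinite cyclic cover of the graph `F ⊔ edge a b`: the integer coordinate counts the
crossings of the edge `ab`, so that the cycle through this edge is unrolled into a line. -/
def cyclicCover (F : SimpleGraph V) (a b : V) : SimpleGraph (V × ℤ) where
  Adj p q := (F ⊔ SimpleGraph.edge a b).Adj p.1 q.1 ∧ q.2 = p.2 + crossing a b p.1 q.1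
  symm := ⟨fun p q h => ⟨h.1.symm, by rw [h.2, crossing_swap a b q.1 p.1]; ring⟩⟩
  loopless := ⟨fun _ h => h.1.ne rfl⟩

lemma isBridge_cyclicCover (F : SimpleGraph V) (a b : V) (i : ℤ) :
    (cyclicCover F a b).IsBridge s((a, i), (b, i + 1)) := by
  rw [SimpleGraph.isBridge_iff]
  rintro ⟨p⟩
  -- Only the edges `(a, i) — (b, i + 1)` change the level, so a walk avoiding it stays below.
  suffices hle : ∀ {u v : V × ℤ},
      ((cyclicCover F a b).deleteEdges {s((a, i), (b, i + 1))}).Walk u v → u.2 ≤ i → v.2 ≤ i by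
    simpa using hle p le_rfl
  intro u v q
  induction q with
  | nil => exact id
  | @cons u v _ h _ ih =>
    refine fun hu => ih ?_
    obtain ⟨⟨-, hlevel⟩, hne⟩ := SimpleGraph.deleteEdges_adj.mp h
    by_contra! hv
    have hcross : u.1 = a ∧ v.1 = b := by
      by_contra hab
      rw [crossing, if_neg hab] at hlevel
      split_ifs at hlevel <;> omega
    rw [crossing, if_pos hcross] at hlevel
    refine hne ?_
    have hui : u = (a, i) := Prod.ext hcross.1 (by split_ifs at hlevel <;> omega)
    have hvi : v = (b, i + 1) := Prod.ext hcross.2 (by split_ifs at hlevel <;> omega)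
    rw [hui, hvi]
    exact mem_singleton _

lemma isAcyclic_boxProd_bot {F : SimpleGraph V} (hF : F.IsAcyclic) :
    (F □ (⊥ : SimpleGraph W)).IsAcyclic := by
  refine LocallyInjective.isAcyclic (C := F) (f := ⟨Prod.fst, fun h => ?_⟩) ?_ hF
  · exact (h.resolve_right fun h => h.1).1
  · rintro p u hu v hv huv
    simp only [SimpleGraph.mem_neighborSet, SimpleGraph.boxProd_adj, SimpleGraph.bot_adj,
      false_and, or_false] at hu hv
    exact Prod.ext huv (hu.2.symm.trans hv.2)

lemma isAcyclic_cyclicCover {F : SimpleGraph V} (hF : F.IsAcyclic) (a b : V) :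
    (cyclicCover F a b).IsAcyclic := by
  intro v c hc
  have hbridge (i : ℤ) : s((a, i), (b, i + 1)) ∉ c.edges :=
    (isBridge_cyclicCover F a b i).notMem_edges_of_isCycle hc
  have hlevel : ∀ e ∈ c.edges, e ∈ (F □ (⊥ : SimpleGraph ℤ)).edgeSet := by
    intro e he
    induction e with
    | h p q =>
    obtain ⟨hadj, hpq⟩ := c.edges_subset_edgeSet he
    obtain ⟨u, i⟩ := p
    obtain ⟨v, j⟩ := q
    have huv : ¬(u = a ∧ v = b) := by
      rintro ⟨rfl, rfl⟩
      have hvu : ¬(v = u ∧ u = v) := fun h => hadj.ne h.1.symm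
      simp only [crossing, and_self, if_true, if_neg hvu] at hpq
      exact hbridge i (by simpa [hpq] using he)
    have hvu : ¬(v = a ∧ u = b) := by
      rintro ⟨rfl, rfl⟩
      simp only [crossing, and_self, if_true, if_neg huv] at hpq
      refine hbridge j ?_
      rw [Sym2.eq_swap]
      simpa [hpq] using he
    have hij : j = i := by simpa [crossing, huv, hvu] using hpq
    have hFadj : F.Adj u v := hadj.resolve_right fun h => by
      rw [SimpleGraph.edge_adj] at h
      tauto
    simpa [hij] using hFadj
  exact isAcyclic_boxProd_bot hF (c.transfer _ hlevel) (hc.transfer hlevel)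

lemma exists_potential {Gt : SimpleGraph T} (hGt : Gt.IsTree) (z₀ : T) {θ : T → T → ℤ}
    (hθ : ∀ u v, θ v u = -θ u v) (hθ₁ : ∀ u v, |θ u v| ≤ 1) :
    ∃ w : T → ℤ, (∀ u v, Gt.Adj u v → w v = w u + θ u v) ∧ ∀ z, |w z| ≤ Gt.dist z₀ z := by
  choose P hP hlength using fun z => hGt.connected.exists_path_of_dist z₀ z
  let w (z : T) : ℤ := ((P z).darts.map fun e => θ e.fst e.snd).sum
  have hforward (u v : T) (h : Gt.Adj u v) (hu : u ∈ (P v).support) : w v = w u + θ u v := by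
    simp only [w, hGt.isAcyclic.path_concat (hP u) (hP v) h hu, SimpleGraph.Walk.darts_concat,
      List.concat_eq_append, List.map_append, List.map_cons, List.map_nil, List.sum_append,
      List.sum_singleton]
  refine ⟨w, fun u v h => ?_, fun z => ?_⟩
  · by_cases hu : u ∈ (P v).support
    · exact hforward u v h hu
    · have := hforward v u h.symm
        (hGt.isAcyclic.mem_support_of_ne_mem_support_of_adj_of_isPath (hP u) (hP v) h hu)
      rw [hθ u v] at this
      linarith
  · rw [← hlength z, ← SimpleGraph.Walk.length_darts]
    simp only [w]
    generalize (P z).darts = l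
    induction l with
    | nil => simp
    | cons e l ih =>
      simp only [List.map_cons, List.sum_cons, List.length_cons]
      push_cast
      linarith [abs_add_le (θ e.fst e.snd) (l.map fun e => θ e.fst e.snd).sum,
        hθ₁ e.fst e.snd]

/-- The winding number `w` of the path from `z₀` to `z` determines `z` among the points of a fibre:
together with the image it embeds the tree into the acyclic graph `cyclicCover F a b`. -/
lemma encard_fiber_le {Gt : SimpleGraph T} (hGt : Gt.IsTree) {F : SimpleGraph V}
    (hF : F.IsAcyclic) {a b : V} {f : Gt →g F ⊔ SimpleGraph.edge a b} (hf : LocallyInjective f)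
    (z₀ : T) (k : ℕ) (v : V) : {z | Gt.dist z₀ z ≤ k ∧ f z = v}.encard ≤ 2 * k + 1 := by
  obtain ⟨w, hw, hwdist⟩ := exists_potential hGt z₀ (θ := fun y z => crossing a b (f y) (f z))
    (fun _ _ => crossing_swap ..) (fun _ _ => abs_crossing_le_one ..)
  let Φ : Gt →g cyclicCover F a b := ⟨fun z => (f z, w z), fun h => ⟨f.map_adj h, hw _ _ h⟩⟩
  have hΦ : LocallyInjective Φ := fun z y hy y' hy' h => hf z hy hy' (congrArg Prod.fst h)
  have hinj := hΦ.injective hGt.connected.preconnected (isAcyclic_cyclicCover hF a b)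
  have hmaps : MapsTo w {z | Gt.dist z₀ z ≤ k ∧ f z = v} (Finset.Icc (-(k : ℤ)) k) := fun z hz => by
    have := hwdist z
    rw [Finset.coe_Icc, mem_Icc, ← abs_le]
    exact this.trans (mod_cast hz.1)
  refine (encard_le_encard_of_injOn hmaps
    fun y hy z hz h => hinj (Prod.ext (hy.2.trans hz.2.symm) h)).trans ?_
  rw [encard_coe_eq_coe_finsetCard, Int.card_Icc]
  norm_cast
  omega

end UnicyclicGraphs

lemma IsCovering.encard_fiber_le [Finite V] {Gt : SimpleGraph T} {G : SimpleGraph V} {π : T → V}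
    {d M k : ℕ} {z₀ : T} (hπ : IsCovering Gt G π) (hd : d ≠ 0) (hGt : IsRegTree Gt d)
    (hG : G.Connected) (hreg : IsReg G d)
    (hcyc : adjPairs G (gball G (π z₀) M) ≤ 2 * (gball G (π z₀) M).ncard) (hk : k ≤ M) (v : V) :
    {z | Gt.dist z₀ z ≤ k ∧ π z = v}.encard ≤ 2 * k + 1 := by
  rw [adjPairs_eq_two_mul_ncard_edgeSet, ← Nat.card_coe_set_eq (gball G (π z₀) M)] at hcyc
  obtain ⟨F, a, b, hF, hle⟩ := exists_isAcyclic_le_sup_edge (connected_induce_gball hG (π z₀) M)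
    (by omega)
  have hball (z : T) (hz : z ∈ gball Gt z₀ M) : π z ∈ gball G (π z₀) M :=
    (hπ.dist_le hGt.1 z₀ z).trans hz
  let f : Gt.induce (gball Gt z₀ M) →g F ⊔ SimpleGraph.edge a b :=
    ⟨fun z => ⟨π z, hball z z.2⟩, fun h => hle (hπ.adj h)⟩
  have hf : LocallyInjective f := fun z y hy y' hy' h => Subtype.ext <|
    hπ.injOn_neighborSet hd hGt.2.2 hreg z hy hy' (congrArg Subtype.val h)
  have htree : (Gt.induce (gball Gt z₀ M)).IsTree :=
    ⟨connected_induce_gball hGt.1 z₀ M, hGt.2.1.induce _⟩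
  obtain hempty | ⟨z₁, hz₁, rfl⟩ := {z | Gt.dist z₀ z ≤ k ∧ π z = v}.eq_empty_or_nonempty
  · simp [hempty]
  refine le_trans ?_ (GFF.encard_fiber_le htree hF hf ⟨z₀, mem_gball_self z₀ M⟩ k
    ⟨π z₁, hball z₁ (hz₁.trans hk)⟩)
  rw [← Subtype.val_injective.encard_image]
  exact encard_le_encard fun z hz => ⟨⟨z, hz.1.trans hk⟩,
    ⟨(dist_induce_gball_le hGt.1 z₀ M _).trans hz.1, Subtype.ext hz.2⟩, rfl⟩

end GraphCoverings

/-! ### Regular trees and the killed Green function -/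

section RegularTrees

variable {V T : Type*} {Gt : SimpleGraph T} {d : ℕ}

lemma IsReg.finite_neighborSet (hGt : IsReg Gt d) (hd : d ≠ 0) (z : T) :
    Finite (Gt.neighborSet z) :=
  Nat.finite_of_card_ne_zero (by rwa [hGt z])

lemma IsReg.isRegularOfDegree [Gt.LocallyFinite] (hGt : IsReg Gt d) :
    Gt.IsRegularOfDegree d := fun z => by
  rw [← SimpleGraph.card_neighborSet_eq_degree, ← Nat.card_eq_fintype_card, hGt z]

lemma eq_of_dist_eq_dist_add_one (hGt : Gt.IsTree) {z₀ z u v : T} (hzu : Gt.Adj z u)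
    (hzv : Gt.Adj z v) (hu : Gt.dist z₀ z = Gt.dist z₀ u + 1)
    (hv : Gt.dist z₀ z = Gt.dist z₀ v + 1) : u = v := by
  obtain ⟨p, hp, -⟩ := hGt.connected.exists_path_of_dist z₀ z
  suffices hpen : ∀ y, Gt.Adj z y → Gt.dist z₀ z = Gt.dist z₀ y + 1 → y = p.penultimate by
    rw [hpen u hzu hu, hpen v hzv hv]
  intro y hzy hy
  obtain ⟨q, hq, hqlength⟩ := hGt.connected.exists_path_of_dist z₀ y
  refine hGt.isAcyclic.eq_penultimate_of_adj_end hp hzy ?_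
  refine hGt.isAcyclic.mem_support_of_ne_mem_support_of_adj_of_isPath hp hq hzy fun hmem => ?_
  have := (SimpleGraph.dist_le (q.takeUntil z hmem)).trans (q.length_takeUntil_le_length hmem)
  omega

variable [Gt.LocallyFinite]

variable (Gt) in
/-- The neighbours of `z` that are farther from the root `z₀` than `z` is. -/
noncomputable def children (z₀ z : T) : Finset T :=
  {u ∈ Gt.neighborFinset z | Gt.dist z₀ u = Gt.dist z₀ z + 1}

variable (Gt) in
/-- The sphere of radius `k` around `z₀` as a finite set; see `mem_sphere`. -/
noncomputable def sphere (z₀ : T) : ℕ → Finset T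
  | 0 => {z₀}
  | k + 1 => (sphere z₀ k).biUnion (children Gt z₀)

lemma mem_children {z₀ z u : T} :
    u ∈ children Gt z₀ z ↔ Gt.Adj z u ∧ Gt.dist z₀ u = Gt.dist z₀ z + 1 := by
  rw [children, Finset.mem_filter, SimpleGraph.mem_neighborFinset]

lemma children_subset {z₀ z : T} : children Gt z₀ z ⊆ Gt.neighborFinset z :=
  Finset.filter_subset _ _

lemma mem_sphere (hGt : Gt.Connected) {z₀ z : T} {k : ℕ} :
    z ∈ sphere Gt z₀ k ↔ Gt.dist z₀ z = k := by
  induction k generalizing z with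
  | zero => rw [sphere, Finset.mem_singleton, hGt.dist_eq_zero_iff, eq_comm]
  | succ k ih =>
    simp only [sphere, Finset.mem_biUnion, ih, mem_children]
    constructor
    · rintro ⟨u, rfl, -, hzu⟩
      exact hzu
    · intro hz
      obtain ⟨u, hzu, hu⟩ := exists_adj_dist_eq_add_one hGt (x := z₀) (y := z)
        (by rintro rfl; simp at hz)
      exact ⟨u, by omega, hzu.symm, hu⟩

lemma sum_sphere_succ (hGt : Gt.IsTree) {A : Type*} [AddCommMonoid A] (z₀ : T) (k : ℕ)
    (f : T → A) :
    ∑ z ∈ sphere Gt z₀ (k + 1), f z = ∑ z ∈ sphere Gt z₀ k, ∑ u ∈ children Gt z₀ z, f u := by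
  refine Finset.sum_biUnion fun u _ v _ huv => Finset.disjoint_left.mpr fun z hzu hzv => huv ?_
  obtain ⟨hadju, hu⟩ := mem_children.mp hzu
  obtain ⟨hadjv, hv⟩ := mem_children.mp hzv
  exact eq_of_dist_eq_dist_add_one hGt hadju.symm hadjv.symm hu hv

lemma children_self (z₀ : T) :
    children Gt z₀ z₀ = Gt.neighborFinset z₀ := by
  refine Finset.filter_true_of_mem fun u hu => ?_
  rw [SimpleGraph.dist_self, SimpleGraph.dist_eq_one_iff_adj]
  exact (Gt.mem_neighborFinset z₀ u).mp hu

lemma neighborFinset_sdiff_children (hGt : Gt.IsTree) {z₀ y z : T} (hz : z ∈ children Gt z₀ y) :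
    Gt.neighborFinset z \ children Gt z₀ z = {y} := by
  obtain ⟨hyz, hdist⟩ := mem_children.mp hz
  ext v
  rw [Finset.mem_sdiff, mem_children, SimpleGraph.mem_neighborFinset, Finset.mem_singleton]
  constructor
  · rintro ⟨hzv, hv⟩
    have hv' := (hGt.dist_eq_dist_add_one_of_adj z₀ hzv).resolve_right fun h => hv ⟨hzv, h⟩
    exact eq_of_dist_eq_dist_add_one hGt hzv hyz.symm hv' hdist
  · rintro rfl
    exact ⟨hyz.symm, fun h => by omega⟩

lemma card_children_add_one (hGt : Gt.IsTree) (hreg : Gt.IsRegularOfDegree d) {z₀ y z : T}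
    (hz : z ∈ children Gt z₀ y) : (children Gt z₀ z).card + 1 = d := by
  rw [← hreg z, ← SimpleGraph.card_neighborFinset_eq_degree,
    ← Finset.card_singleton y, ← neighborFinset_sdiff_children hGt hz, add_comm]
  exact Finset.card_sdiff_add_card_eq_card children_subset

lemma card_children_of_mem_sphere_succ (hGt : Gt.IsTree) (hreg : Gt.IsRegularOfDegree d)
    {z₀ z : T} {k : ℕ} (hz : z ∈ sphere Gt z₀ (k + 1)) :
    ((children Gt z₀ z).card : ℝ) = d - 1 := by
  obtain ⟨y, -, hzy⟩ := Finset.mem_biUnion.mp hz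
  rw [← card_children_add_one hGt hreg hzy]
  push_cast
  ring

lemma card_sphere_succ (hGt : Gt.IsTree) (hreg : Gt.IsRegularOfDegree d) (z₀ : T) (k : ℕ) :
    ((sphere Gt z₀ (k + 1)).card : ℝ) = d * ((d : ℝ) - 1) ^ k := by
  induction k with
  | zero =>
    rw [zero_add, sphere, sphere, Finset.singleton_biUnion, children_self,
      SimpleGraph.card_neighborFinset_eq_degree, hreg z₀, pow_zero, mul_one]
  | succ k ih =>
    rw [Finset.cast_card, sum_sphere_succ hGt, pow_succ, ← mul_assoc, ← ih, ← nsmul_eq_mul]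
    refine Finset.sum_eq_card_nsmul fun z hz => ?_
    rw [← Finset.cast_card, card_children_of_mem_sphere_succ hGt hreg hz]

lemma sum_sphere_succ_laplacian (hGt : Gt.IsTree) (z₀ : T) (k : ℕ) (f : T → ℝ) :
    ∑ z ∈ sphere Gt z₀ (k + 1), ∑ u ∈ Gt.neighborFinset z, (f z - f u) =
      ∑ z ∈ sphere Gt z₀ (k + 1), ∑ u ∈ children Gt z₀ z, (f z - f u) -
        ∑ z ∈ sphere Gt z₀ k, ∑ u ∈ children Gt z₀ z, (f z - f u) := by
  rw [sum_sphere_succ hGt, sum_sphere_succ hGt, ← Finset.sum_sub_distrib]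
  refine Finset.sum_congr rfl fun y _ => ?_
  rw [← Finset.sum_sub_distrib]
  refine Finset.sum_congr rfl fun z hz => ?_
  rw [← Finset.sum_sdiff children_subset,
    neighborFinset_sdiff_children hGt hz, Finset.sum_singleton]
  ring

/-- Only the flux through the boundary survives when the Laplacian is summed over a ball. -/
lemma sum_ball_laplacian (hGt : Gt.IsTree) (z₀ : T) (l : ℕ) (f : T → ℝ) :
    ∑ k ∈ Finset.range (l + 1), ∑ z ∈ sphere Gt z₀ k, ∑ u ∈ Gt.neighborFinset z, (f z - f u) =
      ∑ z ∈ sphere Gt z₀ l, ∑ u ∈ children Gt z₀ z, (f z - f u) := by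
  induction l with
  | zero =>
    rw [zero_add, Finset.sum_range_one, sphere, Finset.sum_singleton, Finset.sum_singleton,
      children_self]
  | succ l ih => rw [Finset.sum_range_succ, ih, sum_sphere_succ_laplacian hGt]; ring

variable (Gt) in
/-- The mean of `f` over the sphere of radius `k` around `z₀`. -/
noncomputable def sphereMean (z₀ : T) (f : T → ℝ) (k : ℕ) : ℝ :=
  (∑ z ∈ sphere Gt z₀ k, f z) / (sphere Gt z₀ k).card

lemma sphereMean_sub_sphereMean_succ (hGt : Gt.IsTree) (hreg : Gt.IsRegularOfDegree d)
    (hd : 2 ≤ d) (z₀ : T) (f : T → ℝ) (l : ℕ) :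
    sphereMean Gt z₀ f l - sphereMean Gt z₀ f (l + 1) = ((d : ℝ) - 1)⁻¹ ^ l *
      ∑ k ∈ Finset.range (l + 1),
        ∑ z ∈ sphere Gt z₀ k, (∑ u ∈ Gt.neighborFinset z, (f z - f u)) / d := by
  have hd₀ : (d : ℝ) ≠ 0 := by positivity
  have hq : (d : ℝ) - 1 ≠ 0 := by
    have : (2 : ℝ) ≤ d := mod_cast hd
    linarith
  simp_rw [← Finset.sum_div]
  rw [sum_ball_laplacian hGt, sphereMean, sphereMean, card_sphere_succ hGt hreg,
    sum_sphere_succ hGt]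
  simp_rw [Finset.sum_sub_distrib, Finset.sum_const, nsmul_eq_mul]
  cases l with
  | zero =>
    simp only [sphere, Finset.sum_singleton, children_self, Finset.card_singleton,
      SimpleGraph.card_neighborFinset_eq_degree, hreg z₀]
    field_simp
    simp
  | succ k =>
    have hchildren : ∑ z ∈ sphere Gt z₀ (k + 1), ((children Gt z₀ z).card : ℝ) * f z =
        ((d : ℝ) - 1) * ∑ z ∈ sphere Gt z₀ (k + 1), f z := by
      rw [Finset.mul_sum]
      exact Finset.sum_congr rfl fun z hz => by
        rw [card_children_of_mem_sphere_succ hGt hreg hz]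
    rw [hchildren, card_sphere_succ hGt hreg, ← sum_sphere_succ hGt, inv_pow]
    field_simp
    ring

/-- The value at distance `k` from `z₀` of the Green function of the walk on the `d`-regular tree
which starts at `z₀` and is killed at distance `M + 1`; see `sum_killedGreen_mul_laplacian`. -/
noncomputable def killedGreen (d M k : ℕ) : ℝ :=
  ((d : ℝ) - 1) / ((d : ℝ) - 2) * (((d : ℝ) - 1)⁻¹ ^ k - ((d : ℝ) - 1)⁻¹ ^ (M + 1))

lemma killedGreen_eq_sum_Ico {M k : ℕ} (hd : 3 ≤ d) (hk : k ≤ M + 1) :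
    killedGreen d M k = ∑ l ∈ Finset.Ico k (M + 1), ((d : ℝ) - 1)⁻¹ ^ l := by
  have hd₃ : (3 : ℝ) ≤ d := mod_cast hd
  have hq : (d : ℝ) - 1 ≠ 0 := by linarith
  have hinv : ((d : ℝ) - 1)⁻¹ - 1 = -(((d : ℝ) - 2) / ((d : ℝ) - 1)) := by
    field_simp
    ring
  rw [geom_sum_Ico (inv_eq_one.not.mpr (by linarith)) hk, hinv, killedGreen, div_neg, ← neg_div,
    neg_sub, div_div_eq_mul_div, mul_comm, mul_div_assoc]

lemma sum_killedGreen_mul_laplacian (hGt : Gt.IsTree) (hreg : Gt.IsRegularOfDegree d)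
    (hd : 3 ≤ d) (z₀ : T) (f : T → ℝ) (M : ℕ) :
    ∑ k ∈ Finset.range (M + 1), killedGreen d M k *
        ∑ z ∈ sphere Gt z₀ k, (∑ u ∈ Gt.neighborFinset z, (f z - f u)) / d =
      f z₀ - sphereMean Gt z₀ f (M + 1) := by
  set D : ℕ → ℝ := fun k => ∑ z ∈ sphere Gt z₀ k, (∑ u ∈ Gt.neighborFinset z, (f z - f u)) / d
  have hroot : sphereMean Gt z₀ f 0 = f z₀ := by simp [sphereMean, sphere]
  calc ∑ k ∈ Finset.range (M + 1), killedGreen d M k * D k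
      = ∑ k ∈ Finset.range (M + 1), ∑ l ∈ Finset.Ico k (M + 1), ((d : ℝ) - 1)⁻¹ ^ l * D k :=
        Finset.sum_congr rfl fun k hk => by
          rw [killedGreen_eq_sum_Ico hd (Finset.mem_range.mp hk).le, Finset.sum_mul]
    _ = ∑ l ∈ Finset.range (M + 1), ∑ k ∈ Finset.range (l + 1), ((d : ℝ) - 1)⁻¹ ^ l * D k := by
        simp_rw [Finset.range_eq_Ico]
        exact Finset.sum_Ico_Ico_comm 0 (M + 1) _
    _ = ∑ l ∈ Finset.range (M + 1), (sphereMean Gt z₀ f l - sphereMean Gt z₀ f (l + 1)) :=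
        Finset.sum_congr rfl fun l _ => by
          rw [sphereMean_sub_sphereMean_succ hGt hreg (by omega), Finset.mul_sum]
    _ = f z₀ - sphereMean Gt z₀ f (M + 1) := by rw [Finset.sum_range_sub', hroot]

variable {G : SimpleGraph V} {π : T → V}

variable (Gt) in
/-- The number of points of the fibre of `π` over `v` at distance `k` from `z₀`. -/
noncomputable def fiberCard (π : T → V) (z₀ : T) (k : ℕ) (v : V) : ℕ :=
  {z ∈ sphere Gt z₀ k | π z = v}.card

lemma sum_sphere_comp [Fintype V] (z₀ : T) (k : ℕ) (g : V → ℝ) :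
    ∑ z ∈ sphere Gt z₀ k, g (π z) = ∑ v, fiberCard Gt π z₀ k v * g v := by
  rw [← Finset.sum_fiberwise' (sphere Gt z₀ k) π g]
  simp_rw [Finset.sum_const, nsmul_eq_mul, fiberCard]

lemma sum_fiberCard [Fintype V] (z₀ : T) (k : ℕ) :
    ∑ v, fiberCard Gt π z₀ k v = (sphere Gt z₀ k).card := by
  exact (Finset.card_eq_sum_card_fiberwise fun _ _ => Finset.mem_univ _).symm

lemma IsCovering.sum_neighborFinset [G.LocallyFinite] (hπ : IsCovering Gt G π) {z : T}
    (hinj : InjOn π (Gt.neighborSet z)) (g : V → ℝ) :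
    ∑ u ∈ Gt.neighborFinset z, g (π u) = ∑ v ∈ G.neighborFinset (π z), g v := by
  have himage : (Gt.neighborFinset z).image π = G.neighborFinset (π z) := by
    rw [← Finset.coe_inj, Finset.coe_image, SimpleGraph.coe_neighborFinset,
      SimpleGraph.coe_neighborFinset, hπ]
  rw [← himage, Finset.sum_image (by rwa [SimpleGraph.coe_neighborFinset])]

variable (Gt) in
/-- The image under `π` of the Green function of the walk on `Gt` started at `z₀` and killed at
distance `M + 1`. -/
noncomputable def pushGreen (d : ℕ) (π : T → V) (z₀ : T) (M : ℕ) (v : V) : ℝ :=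
  ∑ k ∈ Finset.range (M + 1), killedGreen d M k * fiberCard Gt π z₀ k v

variable (Gt) in
/-- The image under `π` of the uniform distribution on the sphere of radius `k` around `z₀`. -/
noncomputable def pushSphere (π : T → V) (z₀ : T) (k : ℕ) (v : V) : ℝ :=
  fiberCard Gt π z₀ k v / (sphere Gt z₀ k).card

lemma sum_pushGreen_mul_laplacian [Fintype V] (hπ : IsCovering Gt G π)
    (hinj : ∀ z, InjOn π (Gt.neighborSet z)) (hGt : Gt.IsTree) (hreg : Gt.IsRegularOfDegree d)
    (hd : 3 ≤ d) (z₀ : T) (M : ℕ) (g : V → ℝ) :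
    ∑ v, pushGreen Gt d π z₀ M v * ((∑ w ∈ G.neighborFinset v, (g v - g w)) / d) =
      g (π z₀) - ∑ v, pushSphere Gt π z₀ (M + 1) v * g v := by
  have hmean : sphereMean Gt z₀ (g ∘ π) (M + 1) = ∑ v, pushSphere Gt π z₀ (M + 1) v * g v := by
    simp_rw [sphereMean, Function.comp_apply, sum_sphere_comp, Finset.sum_div, pushSphere,
      div_mul_eq_mul_div]
  rw [← hmean, ← Function.comp_apply (f := g), ← sum_killedGreen_mul_laplacian hGt hreg hd]
  simp_rw [pushGreen, Finset.sum_mul, Function.comp_apply]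
  rw [Finset.sum_comm]
  refine Finset.sum_congr rfl fun k _ => ?_
  simp_rw [mul_assoc]
  rw [← Finset.mul_sum, ← sum_sphere_comp]
  refine congrArg _ (Finset.sum_congr rfl fun z _ => ?_)
  rw [hπ.sum_neighborFinset (hinj z) fun w => g (π z) - g w]

end RegularTrees

/-! ### Square roots of positive semidefinite matrices -/

section SymmetricMatrices

open Matrix

variable {n : Type*} [Fintype n] {A S R : Matrix n n ℝ}

lemma abs_dotProduct_mulVec_le {δ : ℝ} (hA : ∀ x y, |A x y| ≤ δ) (v : n → ℝ) :
    |v ⬝ᵥ A *ᵥ v| ≤ Fintype.card n * δ * (v ⬝ᵥ v) := by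
  have hterm : ∀ x y, |v x * (A x y * v y)| ≤ δ * (|v x| * |v y|) := fun x y => by
    rw [abs_mul, abs_mul, mul_left_comm]
    gcongr
    exact hA x y
  rcases isEmpty_or_nonempty n with _ | ⟨⟨x₀⟩⟩
  · simp
  have hδ : 0 ≤ δ := (abs_nonneg _).trans (hA x₀ x₀)
  calc |v ⬝ᵥ A *ᵥ v| = |∑ x, ∑ y, v x * (A x y * v y)| := by
        simp_rw [dotProduct, mulVec, dotProduct, Finset.mul_sum]
    _ ≤ ∑ x, ∑ y, δ * (|v x| * |v y|) := (Finset.abs_sum_le_sum_abs _ _).trans <|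
        Finset.sum_le_sum fun x _ => (Finset.abs_sum_le_sum_abs _ _).trans <|
          Finset.sum_le_sum fun y _ => hterm x y
    _ = δ * (∑ x, |v x|) ^ 2 := by simp_rw [sq, Finset.sum_mul_sum, Finset.mul_sum]
    _ ≤ δ * (Fintype.card n * ∑ x, |v x| ^ 2) := by
        gcongr
        exact sq_sum_le_card_mul_sum_sq
    _ = Fintype.card n * δ * (v ⬝ᵥ v) := by simp_rw [sq_abs, dotProduct, sq]; ring

lemma sq_le_of_mulVec_sub_eq_smul (hS : S.PosSemidef) (hR : R.PosSemidef) {δ l : ℝ}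
    (hSR : ∀ x y, |(S * S - R * R) x y| ≤ δ) {v : n → ℝ} (hv : v ≠ 0)
    (hl : (S - R) *ᵥ v = l • v) : l ^ 2 ≤ Fintype.card n * δ := by
  have hS₀ : 0 ≤ v ⬝ᵥ S *ᵥ v := by simpa using hS.dotProduct_mulVec_nonneg v
  have hR₀ : 0 ≤ v ⬝ᵥ R *ᵥ v := by simpa using hR.dotProduct_mulVec_nonneg v
  have hSt : v ᵥ* S = S *ᵥ v := by rw [← mulVec_transpose, ← conjTranspose_eq_transpose_of_trivial,
    hS.isHermitian.eq]
  have hRt : v ᵥ* R = R *ᵥ v := by rw [← mulVec_transpose, ← conjTranspose_eq_transpose_of_trivial,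
    hR.isHermitian.eq]
  have hdiff : v ⬝ᵥ S *ᵥ v - v ⬝ᵥ R *ᵥ v = l * (v ⬝ᵥ v) := by
    rw [← dotProduct_sub, ← sub_mulVec, hl, dotProduct_smul, smul_eq_mul]
  have hquad : v ⬝ᵥ (S * S - R * R) *ᵥ v = l * (v ⬝ᵥ S *ᵥ v + v ⬝ᵥ R *ᵥ v) := by
    have hfactor : S * S - R * R = S * (S - R) + (S - R) * R := by noncomm_ring
    have hMt : v ᵥ* (S - R) = l • v := by rw [vecMul_sub, hSt, hRt, ← sub_mulVec, hl]
    rw [hfactor, add_mulVec, dotProduct_add, ← mulVec_mulVec, hl, ← mulVec_mulVec,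
      dotProduct_mulVec v (S - R), hMt, mulVec_smul, dotProduct_smul, smul_dotProduct, smul_eq_mul,
      smul_eq_mul, mul_add]
  have hvv : 0 < v ⬝ᵥ v := by simpa using dotProduct_star_self_pos_iff.mpr hv
  refine le_of_mul_le_mul_right ?_ hvv
  calc l ^ 2 * (v ⬝ᵥ v) = |l| * |v ⬝ᵥ S *ᵥ v - v ⬝ᵥ R *ᵥ v| := by
        rw [hdiff, abs_mul, abs_of_pos hvv, ← mul_assoc, ← sq, sq_abs]
    _ ≤ |l| * (v ⬝ᵥ S *ᵥ v + v ⬝ᵥ R *ᵥ v) := by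
        gcongr
        exact abs_sub_le_iff.mpr ⟨by linarith, by linarith⟩
    _ = |v ⬝ᵥ (S * S - R * R) *ᵥ v| := by rw [hquad, abs_mul, abs_of_nonneg (add_nonneg hS₀ hR₀)]
    _ ≤ Fintype.card n * δ * (v ⬝ᵥ v) := abs_dotProduct_mulVec_le hSR v

section FunctionalCalculus

variable [DecidableEq n]

lemma cfc_apply_apply (hA : A.IsHermitian) (f : ℝ → ℝ) (x y : n) :
    cfc f A x y = ∑ i, f (hA.eigenvalues i) *
      (hA.eigenvectorBasis i x * hA.eigenvectorBasis i y) := by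
  rw [hA.cfc_eq, IsHermitian.cfc, Unitary.conjStarAlgAut_apply, mul_apply]
  simp only [mul_diagonal, star_apply, star_trivial, hA.eigenvectorUnitary_apply,
    Function.comp_apply, RCLike.ofReal_real_eq_id, id_eq]
  exact Finset.sum_congr rfl fun i _ => by ring

lemma cfc_apply_comm (hA : A.IsHermitian) (f : ℝ → ℝ) (x y : n) : cfc f A x y = cfc f A y x := by
  simp_rw [cfc_apply_apply hA, mul_comm (hA.eigenvectorBasis _ x)]

lemma cfc_apply_self_mono (hA : A.IsHermitian) {f g : ℝ → ℝ} (hfg : ∀ l ∈ spectrum ℝ A, f l ≤ g l)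
    (x : n) : cfc f A x x ≤ cfc g A x x := by
  rw [cfc_apply_apply hA, cfc_apply_apply hA]
  gcongr with i
  · exact mul_self_nonneg _
  · exact hfg _ (hA.eigenvalues_mem_spectrum_real i)

lemma sum_sq_apply_le (hA : A.IsHermitian) {c : ℝ} (hc : ∀ l ∈ spectrum ℝ A, l ^ 2 ≤ c) (x : n) :
    ∑ y, A x y ^ 2 ≤ c := by
  have hsq : ∑ y, A x y ^ 2 = cfc (fun l : ℝ => l ^ 2) A x x := by
    rw [cfc_pow_id A 2 hA.isSelfAdjoint, sq, mul_apply]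
    exact Finset.sum_congr rfl fun y _ => by rw [sq, ← hA.apply y x, star_trivial]
  calc ∑ y, A x y ^ 2 ≤ cfc (fun _ : ℝ => c) A x x := hsq.trans_le (cfc_apply_self_mono hA hc x)
    _ = c := by rw [cfc_const c A hA.isSelfAdjoint, algebraMap_matrix_apply, if_pos rfl,
      Algebra.algebraMap_self_apply]

end FunctionalCalculus

/-- A quantitative form of `‖S - R‖² ≤ ‖S² - R²‖` for positive semidefinite `S` and `R`. -/
lemma sum_sq_sub_apply_le (hS : S.PosSemidef) (hR : R.PosSemidef) {δ : ℝ}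
    (hSR : ∀ x y, |(S * S - R * R) x y| ≤ δ) (x : n) :
    ∑ y, (S - R) x y ^ 2 ≤ Fintype.card n * δ := by
  classical
  have hM : (S - R).IsHermitian := hS.isHermitian.sub hR.isHermitian
  refine sum_sq_apply_le hM ?_ x
  rw [hM.spectrum_real_eq_range_eigenvalues]
  rintro - ⟨i, rfl⟩
  refine sq_le_of_mulVec_sub_eq_smul hS hR hSR ?_ (hM.mulVec_eigenvectorBasis i)
  exact fun h => hM.eigenvectorBasis.orthonormal.ne_zero i (WithLp.ofLp_injective 2 h)

end SymmetricMatrices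

/-! ### The zero-average Green function -/

section ZeroAverageGreen

open Matrix

variable {V : Type*} [Fintype V] {G : SimpleGraph V} {d : ℕ} {β : ℝ}

lemma isHermitian_transP (G : SimpleGraph V) (d : ℕ) : (transP G d).IsHermitian :=
  Matrix.IsHermitian.ext fun u v => by simp only [transP, of_apply, star_trivial, G.adj_comm]

lemma one_sub_transP_mulVec_apply (hreg : IsReg G d) (hd : d ≠ 0) (f : V → ℝ) (x : V) :
    ((1 - transP G d) *ᵥ f) x = (∑ w ∈ G.neighborFinset x, (f x - f w)) / d := by
  have htrans : (transP G d *ᵥ f) x = (∑ w ∈ G.neighborFinset x, f w) / d := by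
    simp_rw [mulVec, dotProduct, transP, of_apply, ite_mul, zero_mul, ← Finset.sum_filter,
      ← Finset.mul_sum, ← SimpleGraph.neighborFinset_eq_filter, inv_mul_eq_div]
  rw [sub_mulVec, one_mulVec, Pi.sub_apply, htrans, Finset.sum_sub_distrib, Finset.sum_const,
    SimpleGraph.card_neighborFinset_eq_degree, hreg.isRegularOfDegree x, nsmul_eq_mul]
  field_simp

lemma eq_of_one_sub_transP_mulVec_eq_zero (hreg : IsReg G d) (hd : d ≠ 0) (hG : G.Connected)
    {f : V → ℝ} (hf : (1 - transP G d) *ᵥ f = 0) (x y : V) : f x = f y := by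
  refine G.lapMatrix_mulVec_eq_zero_iff_forall_reachable.mp ?_ x y (hG x y)
  ext v
  have hv := congrFun hf v
  rw [one_sub_transP_mulVec_apply hreg hd, Pi.zero_apply, div_eq_zero_iff,
    or_iff_left (Nat.cast_ne_zero.mpr hd), Finset.sum_sub_distrib, Finset.sum_const,
    SimpleGraph.card_neighborFinset_eq_degree, nsmul_eq_mul] at hv
  rw [SimpleGraph.lapMatrix_mulVec_apply, Pi.zero_apply, hv]

lemma SpectralGapLB.eq_one_or_le_one_sub (hgap : SpectralGapLB G d β) {l : ℝ}
    (hl : l ∈ spectrum ℝ (transP G d)) : l = 1 ∨ β ≤ 1 - l := by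
  have hP := isHermitian_transP G d
  rw [hP.spectrum_real_eq_range_eigenvalues] at hl
  obtain ⟨i, rfl⟩ := hl
  refine (hgap (hP.eigenvectorBasis i) _ ?_ fun h => ?_).imp_left fun h => (sub_eq_zero.mp h).symm
  · rw [sub_mulVec, one_mulVec, hP.mulVec_eigenvectorBasis, sub_smul, one_smul]
  · exact hP.eigenvectorBasis.orthonormal.ne_zero i (WithLp.ofLp_injective 2 h)

variable {A : Matrix V V ℝ}

lemma cfc_mul_matrix (A : Matrix V V ℝ) (f g : ℝ → ℝ) :
    cfc (fun l => f l * g l) A = cfc f A * cfc g A :=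
  cfc_mul f g A (A.finite_real_spectrum.continuousOn f) (A.finite_real_spectrum.continuousOn g)

lemma cfc_one_sub (hA : A.IsHermitian) : cfc (fun l : ℝ => 1 - l) A = 1 - A := by
  rw [cfc_sub (fun _ => 1) (fun l => l) A, cfc_const_one ℝ A hA.isSelfAdjoint,
    cfc_id' ℝ A hA.isSelfAdjoint]

/-- As `0⁻¹ = 0`, the matrix `cfc (fun l => (1 - l)⁻¹) A` inverts `1 - A` on the orthogonal
complement of its kernel and vanishes on the kernel. -/
lemma cfc_inv_one_sub_mul (hA : A.IsHermitian) :
    cfc (fun l : ℝ => (1 - l)⁻¹) A * (1 - A) =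
      1 - cfc (fun l : ℝ => if l = 1 then 1 else 0) A := by
  have hsymbol : (fun l : ℝ => (1 - l)⁻¹ * (1 - l)) = fun l => 1 - if l = 1 then 1 else 0 := by
    ext l
    split_ifs with hl
    · rw [hl, sub_self, mul_zero]
    · rw [inv_mul_cancel₀ (sub_ne_zero.mpr (Ne.symm hl)), sub_zero]
  rw [← cfc_one_sub hA, ← cfc_mul_matrix, hsymbol,
    cfc_sub (fun _ => 1) _ A continuousOn_const (A.finite_real_spectrum.continuousOn _),
    cfc_const_one ℝ A hA.isSelfAdjoint]

lemma one_sub_mul_cfc_indicator_one (hA : A.IsHermitian) :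
    (1 - A) * cfc (fun l : ℝ => if l = 1 then 1 else 0) A = 0 := by
  have hsymbol : (fun l : ℝ => (1 - l) * if l = 1 then 1 else 0) = fun _ => 0 := by
    ext l
    split_ifs with hl
    · rw [hl, sub_self, zero_mul]
    · rw [mul_zero]
  rw [← cfc_one_sub hA, ← cfc_mul_matrix, hsymbol, cfc_const_zero ℝ A]

lemma cfc_indicator_one_transP (hreg : IsReg G d) (hd : d ≠ 0) (hG : G.Connected) (x y : V) :
    cfc (fun l : ℝ => if l = 1 then 1 else 0) (transP G d) x y = 1 / Nat.card V := by
  have hP := isHermitian_transP G d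
  set E := cfc (fun l : ℝ => if l = 1 then 1 else 0) (transP G d)
  have hcol : ∀ u v w, E u w = E v w := fun u v w => by
    refine eq_of_one_sub_transP_mulVec_eq_zero hreg hd hG (f := fun u => E u w) ?_ u v
    ext u
    exact congrFun₂ (one_sub_mul_cfc_indicator_one hP) u w
  have hrow : (1 - E) *ᵥ (fun _ => 1) = 0 := by
    have hconst : (1 - transP G d) *ᵥ (fun _ => 1) = 0 := by
      ext u
      simp [one_sub_transP_mulVec_apply hreg hd]
    rw [← cfc_inv_one_sub_mul hP, ← mulVec_mulVec, hconst, mulVec_zero]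
  have hsum : ∑ z, E x z = 1 := by
    have := congrFun hrow x
    rw [sub_mulVec, one_mulVec, Pi.sub_apply, Pi.zero_apply, sub_eq_zero] at this
    simpa [mulVec, dotProduct] using this.symm
  have hconst : ∀ z, E x z = E x y := fun z => calc
    E x z = E z x := cfc_apply_comm hP _ x z
    _ = E y x := hcol z y x
    _ = E x y := cfc_apply_comm hP _ y x
  simp_rw [hconst, Finset.sum_const, nsmul_eq_mul, Finset.card_univ,
    ← Nat.card_eq_fintype_card] at hsum
  exact eq_one_div_of_mul_eq_one_right hsum

lemma heatK_eq_cfc (G : SimpleGraph V) (d : ℕ) (t : ℝ) (x y : V) :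
    heatK G d t x y = cfc (fun l : ℝ => Real.exp (-(1 - l) * t)) (transP G d) x y := by
  have hP := isHermitian_transP G d
  have hpow : ∀ k, (transP G d ^ k) x y = ∑ i, hP.eigenvalues i ^ k *
      (hP.eigenvectorBasis i x * hP.eigenvectorBasis i y) := fun k => by
    rw [← cfc_apply_apply hP (· ^ k), cfc_pow_id _ k hP.isSelfAdjoint]
  have hexp : ∀ l : ℝ, HasSum (fun k : ℕ => Real.exp (-t) * t ^ k / k.factorial * l ^ k)
      (Real.exp (-(1 - l) * t)) := fun l => by
    rw [show -(1 - l) * t = -t + l * t by ring, Real.exp_add, Real.exp_eq_exp_ℝ]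
    simp_rw [mul_div_assoc, mul_assoc, div_mul_eq_mul_div, ← mul_pow, mul_comm t l]
    exact (NormedSpace.expSeries_div_hasSum_exp (l * t)).mul_left _
  rw [cfc_apply_apply hP, heatK]
  simp_rw [hpow, Finset.mul_sum, ← mul_assoc]
  exact (hasSum_sum fun i _ => ((hexp _).mul_right _).mul_right _).tsum_eq

lemma zGreen_eq_cfc (hgap : SpectralGapLB G d β) (hβ : 0 < β) (hreg : IsReg G d) (hd : d ≠ 0)
    (hG : G.Connected) (x y : V) :
    zGreen G d (Nat.card V) x y = cfc (fun l : ℝ => (1 - l)⁻¹) (transP G d) x y := by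
  have hP := isHermitian_transP G d
  have hint : ∀ i, IntegrableOn (fun t => (Real.exp (-(1 - hP.eigenvalues i) * t) -
      if hP.eigenvalues i = 1 then 1 else 0)) (Ioi 0) ∧
      ∫ t in Ioi (0 : ℝ), (Real.exp (-(1 - hP.eigenvalues i) * t) -
        if hP.eigenvalues i = 1 then 1 else 0) = (1 - hP.eigenvalues i)⁻¹ := fun i => by
    split_ifs with hi
    · simp [hi]
    · have hpos : -(1 - hP.eigenvalues i) < 0 := by
        have := (hgap.eq_one_or_le_one_sub (hP.eigenvalues_mem_spectrum_real i)).resolve_left hi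
        linarith
      simp only [sub_zero]
      refine ⟨integrableOn_exp_mul_Ioi hpos 0, ?_⟩
      rw [integral_exp_mul_Ioi hpos, mul_zero, Real.exp_zero, neg_div_neg_eq, one_div]
  simp_rw [zGreen, ← cfc_indicator_one_transP hreg hd hG x y, heatK_eq_cfc, cfc_apply_apply hP,
    ← Finset.sum_sub_distrib, ← sub_mul]
  rw [integral_finsetSum _ fun i _ => (hint i).1.mul_const _]
  simp_rw [integral_mul_const, (hint _).2]

lemma zGreen_comm (hgap : SpectralGapLB G d β) (hβ : 0 < β) (hreg : IsReg G d) (hd : d ≠ 0)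
    (hG : G.Connected) (x y : V) : zGreen G d (Nat.card V) x y = zGreen G d (Nat.card V) y x := by
  simp_rw [zGreen_eq_cfc hgap hβ hreg hd hG]
  exact cfc_apply_comm (isHermitian_transP G d) _ x y

lemma SpectralGapLB.inv_one_sub_mem_Icc (hgap : SpectralGapLB G d β) (hβ : 0 < β) {l : ℝ}
    (hl : l ∈ spectrum ℝ (transP G d)) : (1 - l)⁻¹ ∈ Icc 0 (1 / β) := by
  rcases hgap.eq_one_or_le_one_sub hl with rfl | hl
  · simpa using hβ.le
  · rw [one_div]
    exact ⟨inv_nonneg.mpr (hβ.le.trans hl), inv_anti₀ hβ hl⟩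

lemma zGreen_self_nonneg (hgap : SpectralGapLB G d β) (hβ : 0 < β) (hreg : IsReg G d)
    (hd : d ≠ 0) (hG : G.Connected) (x : V) : 0 ≤ zGreen G d (Nat.card V) x x := by
  rw [zGreen_eq_cfc hgap hβ hreg hd hG]
  refine le_of_eq_of_le ?_ (cfc_apply_self_mono (isHermitian_transP G d) (f := fun _ => 0)
    (fun l hl => (hgap.inv_one_sub_mem_Icc hβ hl).1) x)
  rw [cfc_const_zero, Matrix.zero_apply]

lemma sum_sq_zGreen_le (hgap : SpectralGapLB G d β) (hβ : 0 < β) (hreg : IsReg G d) (hd : d ≠ 0)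
    (hG : G.Connected) (x : V) : ∑ y, zGreen G d (Nat.card V) x y ^ 2 ≤ (1 / β) ^ 2 := by
  have hP := isHermitian_transP G d
  simp_rw [zGreen_eq_cfc hgap hβ hreg hd hG]
  refine sum_sq_apply_le (cfc_predicate _ (transP G d) : IsSelfAdjoint _).isHermitian ?_ x
  rw [cfc_map_spectrum _ _ hP.isSelfAdjoint (Matrix.finite_real_spectrum.continuousOn _)]
  rintro - ⟨l, hl, rfl⟩
  obtain ⟨h₀, h₁⟩ := hgap.inv_one_sub_mem_Icc hβ hl
  gcongr

lemma abs_zGreen_sub_le (hgap : SpectralGapLB G d β) (hβ : 0 < β) (hreg : IsReg G d) (hd : d ≠ 0)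
    (hG : G.Connected) {H ν : V → ℝ} {y : V} (hH : (1 - transP G d) *ᵥ H = Pi.single y 1 - ν)
    (x : V) :
    |zGreen G d (Nat.card V) x y - (H x - (∑ v, H v) / Nat.card V)| ≤
      1 / β * √(∑ v, ν v ^ 2) := by
  have herror : zGreen G d (Nat.card V) x y - (H x - (∑ v, H v) / Nat.card V) =
      ∑ v, zGreen G d (Nat.card V) x v * ν v := by
    have hproj := congrArg (· *ᵥ H) (cfc_inv_one_sub_mul (isHermitian_transP G d))
    simp only [← mulVec_mulVec, hH, mulVec_sub, sub_mulVec, one_mulVec] at hproj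
    have hx := congrFun hproj x
    simp only [Pi.sub_apply, mulVec_single_one, col_apply, mulVec, dotProduct,
      cfc_indicator_one_transP hreg hd hG, ← Finset.mul_sum] at hx
    simp_rw [zGreen_eq_cfc hgap hβ hreg hd hG]
    linear_combination hx
  rw [herror]
  refine abs_le_of_sq_le_sq ?_ (by positivity)
  rw [mul_pow, Real.sq_sqrt (Finset.sum_nonneg fun v _ => sq_nonneg (ν v))]
  refine (Finset.sum_mul_sq_le_sq_mul_sq _ _ _).trans ?_
  gcongr
  exact sum_sq_zGreen_le hgap hβ hreg hd hG x

end ZeroAverageGreen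

/-! ### Comparison of the Green functions -/

section GreenComparison

open Matrix

variable {V T : Type*} {G : SimpleGraph V} {Gt : SimpleGraph T}
  {π : T → V} {z₀ w : T} {d M m : ℕ} {β : ℝ}

lemma sum_Ico_mul_pow_le {x : ℝ} (hx₀ : 0 ≤ x) (hx : x ≤ 1 / 2) (m n : ℕ) :
    ∑ k ∈ Finset.Ico m n, (2 * (k : ℝ) + 1) * x ^ k ≤ 2 * (2 * m + 3) * x ^ m := by
  set F : ℕ → ℝ := fun k => 2 * (2 * k + 3) * x ^ k
  have hterm : ∀ k : ℕ, (2 * (k : ℝ) + 1) * x ^ k ≤ F k - F (k + 1) := fun k => by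
    have hpow : 0 ≤ x ^ k * (2 * (2 * k + 5)) * (1 / 2 - x) := by
      have := sub_nonneg.mpr hx
      positivity
    simp only [F]
    push_cast
    rw [pow_succ]
    linarith
  rw [Finset.sum_Ico_eq_sum_range]
  calc ∑ j ∈ Finset.range (n - m), (2 * ((m + j : ℕ) : ℝ) + 1) * x ^ (m + j)
      ≤ ∑ j ∈ Finset.range (n - m), (F (m + j) - F (m + (j + 1))) :=
        Finset.sum_le_sum fun j _ => hterm (m + j)
    _ = F m - F (m + (n - m)) := Finset.sum_range_sub' (fun j => F (m + j)) _
    _ ≤ F m := sub_le_self _ (by positivity)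

lemma killedGreen_nonneg (hd : 3 ≤ d) {k : ℕ} (hk : k ≤ M + 1) : 0 ≤ killedGreen d M k := by
  have hq : (1 : ℝ) ≤ d := by exact_mod_cast (by omega : 1 ≤ d)
  rw [killedGreen_eq_sum_Ico hd hk]
  exact Finset.sum_nonneg fun l _ => pow_nonneg (inv_nonneg.mpr (sub_nonneg.mpr hq)) l

lemma sub_one_div_sub_two_mem_Icc (hd : 3 ≤ d) : ((d : ℝ) - 1) / ((d : ℝ) - 2) ∈ Icc 0 2 := by
  have hd₃ : (3 : ℝ) ≤ d := mod_cast hd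
  exact ⟨div_nonneg (by linarith) (by linarith), (div_le_iff₀ (by linarith)).mpr (by linarith)⟩

lemma killedGreen_le (hd : 3 ≤ d) (M k : ℕ) : killedGreen d M k ≤ 2 * ((d : ℝ) - 1)⁻¹ ^ k := by
  have hq : (0 : ℝ) ≤ (d : ℝ) - 1 := sub_nonneg.mpr (by exact_mod_cast (by omega : 1 ≤ d))
  obtain ⟨hc₀, hc⟩ := sub_one_div_sub_two_mem_Icc hd
  calc killedGreen d M k ≤ ((d : ℝ) - 1) / ((d : ℝ) - 2) * ((d : ℝ) - 1)⁻¹ ^ k :=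
        mul_le_mul_of_nonneg_left (sub_le_self _ (by positivity)) hc₀
    _ ≤ 2 * ((d : ℝ) - 1)⁻¹ ^ k := by gcongr

lemma abs_sum_killedGreen_sub_treeGreen_le (hd : 3 ≤ d) (z₀ w : T) :
    |(∑ k ∈ Finset.range (M + 1), killedGreen d M k * if Gt.dist z₀ w = k then 1 else 0) -
      treeGreen Gt d w z₀| ≤ 2 * ((d : ℝ) - 1)⁻¹ ^ (M + 1) := by
  have hd₃ : (3 : ℝ) ≤ d := mod_cast hd
  have hq : (0 : ℝ) ≤ ((d : ℝ) - 1)⁻¹ := inv_nonneg.mpr (by linarith)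
  have hq₁ : ((d : ℝ) - 1)⁻¹ ≤ 1 := inv_le_one_of_one_le₀ (by linarith)
  obtain ⟨hc₀, hc⟩ := sub_one_div_sub_two_mem_Icc hd
  simp only [mul_ite, mul_one, mul_zero, Finset.sum_ite_eq, Finset.mem_range]
  rw [treeGreen, SimpleGraph.dist_comm]
  split_ifs with hw
  · rw [killedGreen, mul_sub, sub_sub_cancel_left, abs_neg, abs_of_nonneg (by positivity)]
    gcongr
  · rw [zero_sub, abs_neg, abs_of_nonneg (by positivity)]
    exact mul_le_mul hc (pow_le_pow_of_le_one hq hq₁ (not_lt.mp hw)) (by positivity) two_pos.le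

variable [Gt.LocallyFinite]

lemma killedGreen_mul_card_sphere_le (hGt : Gt.IsTree) (hGtreg : Gt.IsRegularOfDegree d)
    (hd : 3 ≤ d) (z₀ : T) (k : ℕ) : killedGreen d M k * (sphere Gt z₀ k).card ≤ 3 := by
  have hd₃ : (3 : ℝ) ≤ d := mod_cast hd
  have hq : (0 : ℝ) < (d : ℝ) - 1 := by linarith
  have hc₀ : (0 : ℝ) < (d : ℝ) - 2 := by linarith
  calc killedGreen d M k * (sphere Gt z₀ k).card
      ≤ ((d : ℝ) - 1) / ((d : ℝ) - 2) * ((d : ℝ) - 1)⁻¹ ^ k * (sphere Gt z₀ k).card := by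
        refine mul_le_mul_of_nonneg_right ?_ (Nat.cast_nonneg _)
        exact mul_le_mul_of_nonneg_left (sub_le_self _ (by positivity)) (by positivity)
    _ ≤ 3 := by
        cases k with
        | zero =>
          simp only [sphere, Finset.card_singleton, pow_zero, Nat.cast_one, mul_one]
          rw [div_le_iff₀ hc₀]
          linarith
        | succ k =>
          rw [card_sphere_succ hGt hGtreg, inv_pow, pow_succ]
          field_simp
          linarith

lemma fiberCard_eq_add (hGt : Gt.Connected) (z₀ w : T) (k : ℕ) :
    fiberCard Gt π z₀ k (π w) = (if Gt.dist z₀ w = k then 1 else 0) +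
      {z ∈ (sphere Gt z₀ k).erase w | π z = π w}.card := by
  rw [fiberCard]
  split_ifs with hw
  · have hmem : w ∈ {z ∈ sphere Gt z₀ k | π z = π w} :=
      Finset.mem_filter.mpr ⟨(mem_sphere hGt).mpr hw, rfl⟩
    rw [Finset.filter_erase, add_comm, Finset.card_erase_add_one hmem]
  · rw [Finset.erase_eq_of_notMem fun h => hw ((mem_sphere hGt).mp h), zero_add]

/-- The contribution of the lifts of `π w` other than `w`. -/
lemma sum_killedGreen_mul_card_erase_mem_Icc (hGt : Gt.Connected) (hd : 3 ≤ d)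
    (hfiber : ∀ k ≤ M, fiberCard Gt π z₀ k (π w) ≤ 2 * k + 1)
    (hm : ∀ z, π z = π w → z ≠ w → m ≤ Gt.dist z₀ z) :
    ∑ k ∈ Finset.range (M + 1), killedGreen d M k *
        {z ∈ (sphere Gt z₀ k).erase w | π z = π w}.card ∈
      Icc 0 (4 * (2 * (m : ℝ) + 3) * ((d : ℝ) - 1)⁻¹ ^ m) := by
  have hd₃ : (3 : ℝ) ≤ d := mod_cast hd
  have hq : (0 : ℝ) ≤ ((d : ℝ) - 1)⁻¹ := inv_nonneg.mpr (by linarith)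
  set e : ℕ → ℝ := fun k =>
    (({z ∈ (sphere Gt z₀ k).erase w | π z = π w} : Finset T).card : ℝ)
  have hzero : ∀ k < m, e k = 0 := fun k hk => by
    simp only [e, Nat.cast_eq_zero, Finset.card_eq_zero, Finset.filter_eq_empty_iff]
    intro z hz hzw
    have := hm z hzw (Finset.ne_of_mem_erase hz)
    rw [(mem_sphere hGt).mp (Finset.mem_of_mem_erase hz)] at this
    omega
  have hle : ∀ k ≤ M, e k ≤ 2 * k + 1 := fun k hk => by
    have := fiberCard_eq_add (π := π) hGt z₀ w k ▸ hfiber k hk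
    simp only [e]
    exact_mod_cast (Nat.le_add_left _ _).trans this
  have hterm : ∀ k < M + 1, 0 ≤ killedGreen d M k * e k ∧
      killedGreen d M k * e k ≤ 2 * ((2 * (k : ℝ) + 1) * ((d : ℝ) - 1)⁻¹ ^ k) := fun k hk => by
    refine ⟨mul_nonneg (killedGreen_nonneg hd hk.le) (Nat.cast_nonneg _), ?_⟩
    refine (mul_le_mul (killedGreen_le hd M k) (hle k (by omega)) (Nat.cast_nonneg _)
      (by positivity)).trans_eq (by ring)
  refine ⟨Finset.sum_nonneg fun k hk => (hterm k (Finset.mem_range.mp hk)).1, ?_⟩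
  calc ∑ k ∈ Finset.range (M + 1), killedGreen d M k * e k
      = ∑ k ∈ Finset.Ico m (M + 1), killedGreen d M k * e k := by
        refine (Finset.sum_subset (fun k hk => ?_) fun k hk hkm => ?_).symm
        · exact Finset.mem_range.mpr (Finset.mem_Ico.mp hk).2
        · rw [hzero k (by simp_all), mul_zero]
    _ ≤ ∑ k ∈ Finset.Ico m (M + 1), 2 * ((2 * (k : ℝ) + 1) * ((d : ℝ) - 1)⁻¹ ^ k) :=
        Finset.sum_le_sum fun k hk => (hterm k (Finset.mem_Ico.mp hk).2).2
    _ ≤ 4 * (2 * (m : ℝ) + 3) * ((d : ℝ) - 1)⁻¹ ^ m := by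
        rw [← Finset.mul_sum]
        have := sum_Ico_mul_pow_le hq
          ((inv_anti₀ two_pos (by linarith)).trans_eq (one_div _).symm) m (M + 1)
        linarith

lemma abs_pushGreen_sub_treeGreen_le (hGt : Gt.Connected) (hd : 3 ≤ d)
    (hfiber : ∀ k ≤ M, fiberCard Gt π z₀ k (π w) ≤ 2 * k + 1)
    (hm : ∀ z, π z = π w → z ≠ w → m ≤ Gt.dist z₀ z) :
    |pushGreen Gt d π z₀ M (π w) - treeGreen Gt d w z₀| ≤
      2 * ((d : ℝ) - 1)⁻¹ ^ (M + 1) + 4 * (2 * (m : ℝ) + 3) * ((d : ℝ) - 1)⁻¹ ^ m := by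
  obtain ⟨hexcess₀, hexcess⟩ := sum_killedGreen_mul_card_erase_mem_Icc hGt hd hfiber hm
  have hsplit : pushGreen Gt d π z₀ M (π w) =
      (∑ k ∈ Finset.range (M + 1), killedGreen d M k * if Gt.dist z₀ w = k then 1 else 0) +
        ∑ k ∈ Finset.range (M + 1), killedGreen d M k *
          {z ∈ (sphere Gt z₀ k).erase w | π z = π w}.card := by
    rw [pushGreen, ← Finset.sum_add_distrib]
    exact Finset.sum_congr rfl fun k _ => by rw [fiberCard_eq_add hGt, ← mul_add]; push_cast; rfl
  rw [hsplit, add_sub_right_comm]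
  refine (abs_add_le _ _).trans (add_le_add (abs_sum_killedGreen_sub_treeGreen_le hd z₀ w) ?_)
  rwa [abs_of_nonneg hexcess₀]

lemma IsCovering.fiberCard_le [Finite V] (hπ : IsCovering Gt G π) (hd : d ≠ 0)
    (hGt : IsRegTree Gt d) (hG : G.Connected) (hreg : IsReg G d)
    (hcyc : adjPairs G (gball G (π z₀) M) ≤ 2 * (gball G (π z₀) M).ncard) {k : ℕ} (hk : k ≤ M)
    (v : V) : fiberCard Gt π z₀ k v ≤ 2 * k + 1 := by
  have hsub : (({z ∈ sphere Gt z₀ k | π z = v} : Finset T) : Set T) ⊆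
      {z | Gt.dist z₀ z ≤ k ∧ π z = v} := fun z hz => by
    obtain ⟨hz, hzv⟩ := Finset.mem_filter.mp hz
    exact ⟨((mem_sphere hGt.1).mp hz).le, hzv⟩
  have := (Set.encard_le_encard hsub).trans (hπ.encard_fiber_le hd hGt hG hreg hcyc hk v)
  rw [Set.encard_coe_eq_coe_finsetCard] at this
  exact_mod_cast this

variable [Fintype V]

lemma one_sub_transP_mulVec_pushGreen (hπ : IsCovering Gt G π)
    (hinj : ∀ z, InjOn π (Gt.neighborSet z)) (hGt : Gt.IsTree) (hGtreg : Gt.IsRegularOfDegree d)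
    (hd : 3 ≤ d) (hreg : IsReg G d) (z₀ : T) (M : ℕ) :
    (1 - transP G d) *ᵥ pushGreen Gt d π z₀ M =
      Pi.single (π z₀) 1 - pushSphere Gt π z₀ (M + 1) := by
  have hsymm : (1 - transP G d)ᵀ = 1 - transP G d :=
    (isHermitian_one.sub (isHermitian_transP G d)).eq
  ext x
  have hx := sum_pushGreen_mul_laplacian hπ hinj hGt hGtreg hd z₀ M (Pi.single x 1)
  simp_rw [← one_sub_transP_mulVec_apply hreg (by omega : d ≠ 0)] at hx
  have hdual : ∑ v, pushGreen Gt d π z₀ M v * ((1 - transP G d) *ᵥ Pi.single x 1) v =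
      ((1 - transP G d) *ᵥ pushGreen Gt d π z₀ M) x := by
    rw [← dotProduct, dotProduct_mulVec, ← mulVec_transpose, hsymm, dotProduct_single_one]
  rw [← hdual, hx, Pi.sub_apply, Pi.single_comm, ← dotProduct, dotProduct_single_one]

lemma sum_pushGreen (z₀ : T) : ∑ v, pushGreen Gt d π z₀ M v =
    ∑ k ∈ Finset.range (M + 1), killedGreen d M k * (sphere Gt z₀ k).card := by
  simp_rw [pushGreen]
  rw [Finset.sum_comm]
  exact Finset.sum_congr rfl fun k _ => by
    rw [← Finset.mul_sum, ← Nat.cast_sum, sum_fiberCard]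

lemma sum_pushGreen_mem_Icc (hGt : Gt.IsTree) (hGtreg : Gt.IsRegularOfDegree d) (hd : 3 ≤ d)
    (z₀ : T) : ∑ v, pushGreen Gt d π z₀ M v ∈ Icc 0 (3 * ((M : ℝ) + 1)) := by
  rw [sum_pushGreen]
  constructor
  · exact Finset.sum_nonneg fun k hk => mul_nonneg
      (killedGreen_nonneg hd (Finset.mem_range.mp hk).le) (Nat.cast_nonneg _)
  · refine (Finset.sum_le_card_nsmul _ _ 3 fun k _ =>
      killedGreen_mul_card_sphere_le hGt hGtreg hd z₀ k).trans_eq ?_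
    rw [Finset.card_range, nsmul_eq_mul, mul_comm]
    push_cast
    rfl

lemma sum_sq_pushSphere_le (hGt : Gt.IsTree) (hGtreg : Gt.IsRegularOfDegree d) (hd : 2 ≤ d)
    (hfiber : ∀ v, fiberCard Gt π z₀ (M + 1) v ≤ 2 * (M + 1) + 1) :
    ∑ v, pushSphere Gt π z₀ (M + 1) v ^ 2 ≤ (2 * (M : ℝ) + 3) * ((d : ℝ) - 1)⁻¹ ^ (M + 1) := by
  have hd₂ : (2 : ℝ) ≤ d := mod_cast hd
  have hq : (0 : ℝ) < (d : ℝ) - 1 := by linarith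
  have hcard := card_sphere_succ hGt hGtreg z₀ M
  set c : ℝ := ((sphere Gt z₀ (M + 1)).card : ℝ)
  have hc : 0 < c := by rw [hcard]; positivity
  have hterm : ∀ v, pushSphere Gt π z₀ (M + 1) v ^ 2 ≤
      (2 * (M : ℝ) + 3) / c ^ 2 * fiberCard Gt π z₀ (M + 1) v := fun v => by
    have hv : (fiberCard Gt π z₀ (M + 1) v : ℝ) ≤ 2 * M + 3 := by
      exact_mod_cast (hfiber v).trans_eq (by ring)
    rw [pushSphere, div_pow, div_mul_eq_mul_div, sq (fiberCard _ _ _ _ _ : ℝ)]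
    gcongr
  calc ∑ v, pushSphere Gt π z₀ (M + 1) v ^ 2
      ≤ ∑ v, (2 * (M : ℝ) + 3) / c ^ 2 * fiberCard Gt π z₀ (M + 1) v :=
        Finset.sum_le_sum fun v _ => hterm v
    _ = (2 * (M : ℝ) + 3) * c⁻¹ := by
        rw [← Finset.mul_sum, ← Nat.cast_sum, sum_fiberCard]
        change (2 * (M : ℝ) + 3) / c ^ 2 * c = _
        field_simp
    _ ≤ (2 * (M : ℝ) + 3) * ((d : ℝ) - 1)⁻¹ ^ (M + 1) := by
        rw [hcard, inv_pow, pow_succ']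
        gcongr
        linarith

/-- The bound for the difference of the two Green functions in terms of the distance `m` from `z₀`
to the other lifts, when the ball of radius `M + 1` contains at most one cycle. -/
noncomputable def greenError (d : ℕ) (β : ℝ) (N M m : ℕ) : ℝ :=
  2 * ((d : ℝ) - 1)⁻¹ ^ (M + 1) + 4 * (2 * (m : ℝ) + 3) * ((d : ℝ) - 1)⁻¹ ^ m +
    3 * ((M : ℝ) + 1) / N + 1 / β * √((2 * (M : ℝ) + 3) * ((d : ℝ) - 1)⁻¹ ^ (M + 1))

theorem abs_zGreen_sub_treeGreen_le (hgap : SpectralGapLB G d β) (hβ : 0 < β) (hd : 3 ≤ d)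
    (hreg : IsReg G d) (hG : G.Connected) (hGt : IsRegTree Gt d) (hπ : IsCovering Gt G π)
    (hcyc : adjPairs G (gball G (π z₀) (M + 1)) ≤ 2 * (gball G (π z₀) (M + 1)).ncard)
    (hm : ∀ z, π z = π w → z ≠ w → m ≤ Gt.dist z₀ z) :
    |zGreen G d (Nat.card V) (π w) (π z₀) - treeGreen Gt d w z₀| ≤
      greenError d β (Nat.card V) M m := by
  have hd₀ : d ≠ 0 := by omega
  have htree : Gt.IsTree := ⟨hGt.1, hGt.2.1⟩
  have hGtreg : Gt.IsRegularOfDegree d := hGt.2.2.isRegularOfDegree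
  have hfiber : ∀ k ≤ M + 1, ∀ v, fiberCard Gt π z₀ k v ≤ 2 * k + 1 := fun k hk v =>
    hπ.fiberCard_le hd₀ hGt hG hreg hcyc hk v
  have hspectral := abs_zGreen_sub_le hgap hβ hreg hd₀ hG
    (one_sub_transP_mulVec_pushGreen hπ (hπ.injOn_neighborSet hd₀ hGt.2.2 hreg) htree hGtreg hd
      hreg z₀ M) (π w)
  have hlocal := abs_pushGreen_sub_treeGreen_le (M := M) hGt.1 hd
    (fun k hk => hfiber k (by omega) (π w)) hm
  have herror : 1 / β * √(∑ v, pushSphere Gt π z₀ (M + 1) v ^ 2) ≤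
      1 / β * √((2 * (M : ℝ) + 3) * ((d : ℝ) - 1)⁻¹ ^ (M + 1)) := by
    gcongr
    exact sum_sq_pushSphere_le htree hGtreg (by omega) (hfiber (M + 1) le_rfl)
  obtain ⟨hsum₀, hsum⟩ := sum_pushGreen_mem_Icc (π := π) (M := M) htree hGtreg hd z₀
  have hmean₀ : 0 ≤ (∑ v, pushGreen Gt d π z₀ M v) / Nat.card V := by positivity
  have hmean : (∑ v, pushGreen Gt d π z₀ M v) / Nat.card V ≤ 3 * ((M : ℝ) + 1) / Nat.card V := by
    gcongr
  rw [abs_le] at hspectral hlocal ⊢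
  rw [greenError]
  constructor <;> linarith

end GreenComparison

/-! ### Gaussian fields -/

section GaussianField

open Matrix

variable {I ι : Type*} {μ ν : Measure (I → ℝ)} {K : I → I → ℝ}

lemma IsGaussianField.map_comp_injective (h : IsGaussianField μ K) {f : ι → I}
    (hf : f.Injective) :
    IsGaussianField (μ.map fun ω i => ω (f i)) fun i j => K (f i) (f j) := by
  have := h.1
  have hmeas : Measurable fun (ω : I → ℝ) (i : ι) => ω (f i) :=
    measurable_pi_lambda _ fun i => measurable_pi_apply (f i)
  refine ⟨Measure.isProbabilityMeasure_map hmeas.aemeasurable, fun c => ?_⟩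
  set c' := c.embDomain ⟨f, hf⟩
  have hsum : ∀ F : I → ℝ → ℝ,
      ∑ i ∈ c'.support, F i (c' i) = ∑ i ∈ c.support, F (f i) (c i) := fun F => by
    simp only [c', Finsupp.support_embDomain, Finset.sum_map, Finsupp.embDomain_apply_self]
    rfl
  have hlin : ∀ ω : I → ℝ, ∑ i ∈ c'.support, c' i * ω i = ∑ i ∈ c.support, c i * ω (f i) :=
    fun ω => hsum fun i a => a * ω i
  have hquad : ∑ i ∈ c'.support, ∑ j ∈ c'.support, c' i * c' j * K i j =
      ∑ i ∈ c.support, ∑ j ∈ c.support, c i * c j * K (f i) (f j) :=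
    (hsum fun i a => ∑ j ∈ c'.support, a * c' j * K i j).trans <|
      Finset.sum_congr rfl fun i _ => hsum fun j b => c i * b * K (f i) j
  rw [Measure.map_map (by fun_prop) hmeas, ← hquad, ← h.2 c']
  exact congrArg μ.map (funext fun ω => (hlin ω).symm)

section Fintype

variable [Fintype ι] {P Q : Measure (ι → ℝ)} {A B : Matrix ι ι ℝ}

lemma IsGaussianField.map_dotProduct (h : IsGaussianField P A) (c : ι → ℝ) :
    P.map (fun ω => c ⬝ᵥ ω) = gaussianReal 0 (c ⬝ᵥ A *ᵥ c).toNNReal := by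
  set c' := Finsupp.equivFunOnFinite.symm c
  have hsum : ∀ F : ι → ℝ → ℝ, (∀ i, F i 0 = 0) →
      ∑ i ∈ c'.support, F i (c' i) = ∑ i, F i (c i) :=
    fun F hF => Finsupp.sum_fintype c' F hF
  have hquad : ∑ i ∈ c'.support, ∑ j ∈ c'.support, c' i * c' j * A i j = c ⬝ᵥ A *ᵥ c := by
    rw [hsum (fun i a => ∑ j ∈ c'.support, a * c' j * A i j) (by simp)]
    simp only [dotProduct, mulVec, Finset.mul_sum]
    refine Finset.sum_congr rfl fun i _ => ?_
    rw [hsum (fun j b => c i * b * A i j) (by simp)]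
    exact Finset.sum_congr rfl fun j _ => by ring
  rw [← hquad, ← h.2 c']
  exact congrArg P.map (funext fun ω => (hsum (fun i a => a * ω i) (by simp)).symm)

lemma IsGaussianField.variance_dotProduct (h : IsGaussianField P A) (c : ι → ℝ) :
    Var[fun ω => c ⬝ᵥ ω; P] = (c ⬝ᵥ A *ᵥ c).toNNReal := by
  have hc : Measurable fun ω : ι → ℝ => c ⬝ᵥ ω := by fun_prop
  rw [← variance_id_gaussianReal (μ := 0), ← h.map_dotProduct, variance_map aemeasurable_id
    hc.aemeasurable]
  rfl

lemma stdGaussian_map_dotProduct (a : ι → ℝ) :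
    (stdGaussian (EuclideanSpace ℝ ι)).map (fun z => a ⬝ᵥ z.ofLp) =
      gaussianReal 0 (a ⬝ᵥ a).toNNReal := by
  have h := IsGaussian.map_eq_gaussianReal (μ := stdGaussian (EuclideanSpace ℝ ι))
    (innerSL ℝ (WithLp.toLp 2 a))
  rw [integral_strongDual_stdGaussian, variance_dual_stdGaussian, innerSL_apply_norm,
    EuclideanSpace.real_norm_sq_eq] at h
  simp only [dotProduct, ← sq]
  rw [← h]
  exact congrArg (stdGaussian _).map (funext fun z => by simp [PiLp.inner_apply, mul_comm])

lemma isGaussianField_map_mulVec (S : Matrix I ι ℝ) :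
    IsGaussianField ((stdGaussian (EuclideanSpace ℝ ι)).map fun z => S *ᵥ z.ofLp) (S * Sᵀ) := by
  have hmeas : Measurable fun z : EuclideanSpace ℝ ι => S *ᵥ z.ofLp :=
    measurable_pi_lambda _ fun i => by unfold mulVec dotProduct; fun_prop
  refine ⟨Measure.isProbabilityMeasure_map hmeas.aemeasurable, fun c => ?_⟩
  have hquad : ∑ i ∈ c.support, ∑ j ∈ c.support, c i * c j * (S * Sᵀ) i j =
      (∑ i ∈ c.support, c i • S i) ⬝ᵥ ∑ i ∈ c.support, c i • S i := by
    simp only [sum_dotProduct, dotProduct_sum, smul_dotProduct, dotProduct_smul, smul_eq_mul,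
      Finset.mul_sum]
    rw [Finset.sum_comm]
    exact Finset.sum_congr rfl fun j _ => Finset.sum_congr rfl fun i _ =>
      (mul_assoc _ _ _).trans (mul_left_comm _ _ _)
  rw [Measure.map_map (by fun_prop) hmeas, hquad, ← stdGaussian_map_dotProduct]
  refine congrArg (stdGaussian _).map (funext fun z => ?_)
  simp only [sum_dotProduct, smul_dotProduct, smul_eq_mul]
  rfl

end Fintype

section Finite

variable [Finite ι] {P Q : Measure (ι → ℝ)} {A B : Matrix ι ι ℝ}

lemma IsGaussianField.unique (hP : IsGaussianField P A) (hQ : IsGaussianField Q A) : P = Q := by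
  have := hP.1
  have := hQ.1
  cases nonempty_fintype ι
  refine Measure.ext_of_charFunDual (funext fun L => ?_)
  have hL : (L : (ι → ℝ) → ℝ) = fun ω => (fun i => L (Pi.single i 1)) ⬝ᵥ ω := funext fun ω => by
    conv_lhs => rw [pi_eq_sum_univ' ω, map_sum]
    simp only [map_smul, smul_eq_mul, dotProduct, mul_comm]
  rw [charFunDual_eq_charFun_map_one, charFunDual_eq_charFun_map_one, hL, hP.map_dotProduct,
    hQ.map_dotProduct]

lemma IsGaussianField.memLp_eval (h : IsGaussianField P A) (i : ι) :
    MemLp (fun ω => ω i) 2 P := by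
  cases nonempty_fintype ι
  have hi := h.map_dotProduct (Pi.single i 1)
  simp only [single_one_dotProduct] at hi
  have hid : MemLp id 2 (P.map fun ω => ω i) := hi ▸ memLp_id_gaussianReal 2
  exact (memLp_map_measure_iff aestronglyMeasurable_id (measurable_pi_apply i).aemeasurable).mp hid

/-- Both `Var[Xᵢ + Xⱼ]` and `Var[Xᵢ - Xⱼ]` are positive parts, so each dominates the corresponding
quadratic form; by the parallelogram law neither truncation is effective. -/
lemma IsGaussianField.covariance_eval (h : IsGaussianField P A) (hsymm : A.IsSymm)
    (hdiag : ∀ i, 0 ≤ A i i) (i j : ι) : cov[fun ω => ω i, fun ω => ω j; P] = A i j := by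
  cases nonempty_fintype ι
  have := h.1
  have hvar : ∀ k, Var[fun ω => ω k; P] = A k k := fun k => by
    have hk := h.variance_dotProduct (Pi.single k 1)
    simpa [hdiag k] using hk
  have hadd : A i i + 2 * A i j + A j j ≤ Var[fun ω => ω i + ω j; P] := by
    have hij := h.variance_dotProduct (Pi.single i 1 + Pi.single j 1)
    simp only [add_dotProduct, mulVec_add, dotProduct_add, single_one_dotProduct,
      mulVec_single_one, col_apply, hsymm.apply] at hij
    rw [hij]
    refine le_trans (le_of_eq ?_) (Real.le_coe_toNNReal _)
    linarith [hsymm.apply i j]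
  have hsub : A i i - 2 * A i j + A j j ≤ Var[fun ω => ω i - ω j; P] := by
    have hij := h.variance_dotProduct (Pi.single i 1 - Pi.single j 1)
    simp only [sub_dotProduct, mulVec_sub, dotProduct_sub, single_one_dotProduct,
      mulVec_single_one, col_apply, hsymm.apply] at hij
    rw [hij]
    refine le_trans (le_of_eq ?_) (Real.le_coe_toNNReal _)
    linarith [hsymm.apply i j]
  rw [variance_fun_add (h.memLp_eval i) (h.memLp_eval j), hvar, hvar] at hadd
  rw [variance_fun_sub (h.memLp_eval i) (h.memLp_eval j), hvar, hvar] at hsub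
  linarith

lemma IsGaussianField.posSemidef (h : IsGaussianField P A) (hsymm : A.IsSymm)
    (hdiag : ∀ i, 0 ≤ A i i) : A.PosSemidef := by
  cases nonempty_fintype ι
  have := h.1
  refine .of_dotProduct_mulVec_nonneg hsymm fun c => ?_
  have hvar : Var[fun ω => c ⬝ᵥ ω; P] = c ⬝ᵥ A *ᵥ c := by
    have hmem := fun i => (h.memLp_eval i).const_mul (c i)
    rw [← covariance_self (by fun_prop)]
    simp only [dotProduct, mulVec, Finset.mul_sum]
    rw [covariance_fun_sum_fun_sum hmem hmem]
    refine Finset.sum_congr rfl fun i _ => Finset.sum_congr rfl fun j _ => ?_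
    rw [covariance_const_mul_left, covariance_const_mul_right,
      h.covariance_eval hsymm hdiag, mul_comm (c j)]
  simpa only [star_trivial, ← hvar] using variance_nonneg _ _

end Finite

lemma gaussianReal_lt_abs_le {v : ℝ≥0} {s ε : ℝ} (hv : v ≤ s) (hε : 0 ≤ ε) :
    gaussianReal 0 v {x | ε < |x|} ≤ ENNReal.ofReal (2 * Real.exp (-(ε ^ 2 / (2 * s)))) := by
  have hmgf : HasSubgaussianMGF id s.toNNReal (gaussianReal 0 v) := by
    refine ⟨integrable_exp_mul_gaussianReal, fun t => ?_⟩
    simp only [mgf_id_gaussianReal, zero_mul, zero_add, Real.coe_toNNReal s (v.2.trans hv)]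
    gcongr
  have hsub : {x : ℝ | ε < |x|} ⊆ {x | ε ≤ id x} ∪ {x | ε ≤ (-id) x} := fun x hx =>
    (lt_abs.mp (show ε < |x| from hx)).imp (fun h => h.le) (fun h => h.le)
  have hexp : -ε ^ 2 / (2 * (s.toNNReal : ℝ)) = -(ε ^ 2 / (2 * s)) := by
    rw [Real.coe_toNNReal s (v.2.trans hv), neg_div]
  calc gaussianReal 0 v {x | ε < |x|}
      ≤ ENNReal.ofReal ((gaussianReal 0 v).real {x | ε ≤ id x}) +
          ENNReal.ofReal ((gaussianReal 0 v).real {x | ε ≤ (-id) x}) := by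
        rw [ofReal_measureReal, ofReal_measureReal]
        exact (measure_mono hsub).trans (measure_union_le _ _)
    _ ≤ _ := by
        rw [two_mul, ENNReal.ofReal_add (Real.exp_pos _).le (Real.exp_pos _).le, ← hexp]
        gcongr
        · exact hmgf.measure_ge_le hε
        · exact hmgf.neg.measure_ge_le hε

end GaussianField

/-! ### Couplings of Gaussian fields -/

section Gluing

variable {A B C D : Type*} [MeasurableSpace A] [MeasurableSpace B] [MeasurableSpace C]
  [MeasurableSpace D] [StandardBorelSpace D] [Nonempty D]

lemma exists_measure_map_prodMap_id_eq (μ : Measure A) [IsProbabilityMeasure μ] {f : A → C}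
    (hf : Measurable f) (W : Measure (C × D)) [IsProbabilityMeasure W]
    (hW : W.map Prod.fst = μ.map f) :
    ∃ Q : Measure (A × D), IsProbabilityMeasure Q ∧ Q.map Prod.fst = μ ∧
      Q.map (Prod.map f id) = W := by
  refine ⟨μ.compProd (W.condKernel.comap f hf), inferInstance, Measure.fst_compProd _ _, ?_⟩
  have hm : Measurable (Prod.map f (id : D → D)) := hf.prodMap measurable_id
  conv_rhs => rw [← W.disintegrate W.condKernel, Measure.fst, hW]
  ext s hs
  rw [Measure.map_apply hm hs, Measure.compProd_apply (hm hs), Measure.compProd_apply hs,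
    lintegral_map (Kernel.measurable_kernel_prodMk_left hs) hf]
  rfl

lemma exists_measure_map_prodMap_eq [StandardBorelSpace A] [Nonempty A]
    (μ : Measure A) [IsProbabilityMeasure μ] (ν : Measure B) [IsProbabilityMeasure ν]
    {f : A → C} (hf : Measurable f) {g : B → D} (hg : Measurable g)
    (W : Measure (C × D)) [IsProbabilityMeasure W] (hfst : W.map Prod.fst = μ.map f)
    (hsnd : W.map Prod.snd = ν.map g) :
    ∃ Q : Measure (A × B), Q.map Prod.fst = μ ∧ Q.map Prod.snd = ν ∧
      Q.map (Prod.map f g) = W := by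
  obtain ⟨Q, _, hQfst, hQ⟩ := exists_measure_map_prodMap_id_eq μ hf W hfst
  have : IsProbabilityMeasure (Q.map Prod.swap) :=
    Measure.isProbabilityMeasure_map measurable_swap.aemeasurable
  have hf' : Measurable (Prod.map f (id : D → D)) := hf.prodMap measurable_id
  have hg' : Measurable (Prod.map g (id : A → A)) := hg.prodMap measurable_id
  have hswap : (Q.map Prod.swap).map Prod.fst = ν.map g := by
    rw [← hsnd, ← hQ, Measure.map_map measurable_fst measurable_swap,
      Measure.map_map measurable_snd hf']
    rfl
  obtain ⟨Q', _, hQ'fst, hQ'⟩ := exists_measure_map_prodMap_id_eq ν hg (Q.map Prod.swap) hswap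
  refine ⟨Q'.map Prod.swap, ?_, ?_, ?_⟩
  · calc (Q'.map Prod.swap).map Prod.fst
        = (Q'.map (Prod.map g id)).map Prod.snd := by
          rw [Measure.map_map measurable_fst measurable_swap, Measure.map_map measurable_snd hg']
          rfl
      _ = μ := by
          rw [hQ', Measure.map_map measurable_snd measurable_swap]
          exact hQfst
  · rwa [Measure.map_map measurable_snd measurable_swap]
  · calc (Q'.map Prod.swap).map (Prod.map f g)
        = (Q'.map (Prod.map g id)).map (Prod.map f id ∘ Prod.swap) := by
          rw [Measure.map_map (hf.prodMap hg) measurable_swap,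
            Measure.map_map (hf'.comp measurable_swap) hg']
          rfl
      _ = W := by
          rw [hQ', Measure.map_map (hf'.comp measurable_swap) measurable_swap]
          exact hQ

end Gluing

section Coupling

open Matrix
open scoped MatrixOrder

variable {I J ι : Type*} [Fintype ι] {δ s : ℝ}

lemma exists_posSemidef_mul_self_eq {A : Matrix ι ι ℝ} (hA : A.PosSemidef) :
    ∃ S : Matrix ι ι ℝ, S.PosSemidef ∧ S * S = A := by
  classical
  exact ⟨CFC.sqrt A, nonneg_iff_posSemidef.mp (CFC.sqrt_nonneg A),
    CFC.sqrt_mul_sqrt_self A hA.nonneg⟩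

/-- The two fields are driven by the same white noise through the square roots of their
covariances. -/
lemma IsGaussianField.exists_coupling_of_posSemidef {P Q : Measure (ι → ℝ)} {A B : Matrix ι ι ℝ}
    (hP : IsGaussianField P A) (hQ : IsGaussianField Q B) (hA : A.PosSemidef) (hB : B.PosSemidef)
    (hAB : ∀ i j, |A i j - B i j| ≤ δ) (hs : Fintype.card ι * δ ≤ s) :
    ∃ W : Measure ((ι → ℝ) × (ι → ℝ)), W.map Prod.fst = P ∧ W.map Prod.snd = Q ∧
      ∀ ε, 0 ≤ ε → ∀ i, W {p | ε < |p.1 i - p.2 i|} ≤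
        ENNReal.ofReal (2 * Real.exp (-(ε ^ 2 / (2 * s)))) := by
  obtain ⟨S, hS, rfl⟩ := exists_posSemidef_mul_self_eq hA
  obtain ⟨R, hR, rfl⟩ := exists_posSemidef_mul_self_eq hB
  set γ := stdGaussian (EuclideanSpace ℝ ι)
  have hmeas : ∀ M : Matrix ι ι ℝ, Measurable fun z : EuclideanSpace ℝ ι => M *ᵥ z.ofLp :=
    fun M => by unfold mulVec dotProduct; fun_prop
  have hSR := (hmeas S).prodMk (hmeas R)
  have hlaw : ∀ {M : Matrix ι ι ℝ} {L : Measure (ι → ℝ)}, M.PosSemidef →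
      IsGaussianField L (M * M) → γ.map (fun z => M *ᵥ z.ofLp) = L := fun {M L} hM hL => by
    have hMM := isGaussianField_map_mulVec M
    rw [(conjTranspose_eq_transpose_of_trivial M).symm.trans hM.isHermitian] at hMM
    exact hMM.unique hL
  refine ⟨γ.map fun z => (S *ᵥ z.ofLp, R *ᵥ z.ofLp), ?_, ?_, fun ε hε i => ?_⟩
  · rw [Measure.map_map measurable_fst hSR]
    exact hlaw hS hP
  · rw [Measure.map_map measurable_snd hSR]
    exact hlaw hR hQ
  · have htail : MeasurableSet {x : ℝ | ε < |x|} := measurableSet_lt (by fun_prop) (by fun_prop)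
    have hdiff : (γ.map fun z => (S *ᵥ z.ofLp, R *ᵥ z.ofLp)).map (fun p => p.1 i - p.2 i) =
        gaussianReal 0 ((S i - R i) ⬝ᵥ (S i - R i)).toNNReal := by
      rw [Measure.map_map (by fun_prop) hSR, ← stdGaussian_map_dotProduct]
      exact congrArg γ.map (funext fun z => (sub_dotProduct (S i) (R i) z.ofLp).symm)
    have hvar : ((S i - R i) ⬝ᵥ (S i - R i)).toNNReal ≤ s := by
      have hnonneg : 0 ≤ (S i - R i) ⬝ᵥ (S i - R i) :=
        Finset.sum_nonneg fun _ _ => mul_self_nonneg _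
      rw [Real.coe_toNNReal _ hnonneg]
      simp only [dotProduct, ← sq]
      exact (sum_sq_sub_apply_le hS hR hAB i).trans hs
    have := gaussianReal_lt_abs_le hvar hε
    rwa [← hdiff, Measure.map_apply (by fun_prop) htail] at this

theorem IsGaussianField.exists_coupling [Countable I] {μ : Measure (I → ℝ)} {ν : Measure (J → ℝ)}
    {K : I → I → ℝ} {L : J → J → ℝ} (hμ : IsGaussianField μ K) (hν : IsGaussianField ν L)
    (hK : ∀ i j, K i j = K j i) (hK₀ : ∀ i, 0 ≤ K i i)
    (hL : ∀ i j, L i j = L j i) (hL₀ : ∀ i, 0 ≤ L i i)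
    {f : ι → I} (hf : f.Injective) {g : ι → J} (hg : g.Injective)
    (hKL : ∀ i j, |K (f i) (f j) - L (g i) (g j)| ≤ δ) (hs : Fintype.card ι * δ ≤ s) :
    ∃ Q : Measure ((I → ℝ) × (J → ℝ)), Q.map Prod.fst = μ ∧ Q.map Prod.snd = ν ∧
      ∀ ε, 0 ≤ ε → Q {q | ∃ i, ε < |q.1 (f i) - q.2 (g i)|} ≤
        ENNReal.ofReal (2 * Fintype.card ι * Real.exp (-(ε ^ 2 / (2 * s)))) := by
  have := hμ.1
  have := hν.1
  have hμf := hμ.map_comp_injective hf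
  have hνg := hν.map_comp_injective hg
  obtain ⟨W, hWfst, hWsnd, hW⟩ := hμf.exists_coupling_of_posSemidef hνg
    (hμf.posSemidef (IsSymm.ext fun i j => hK _ _) fun i => hK₀ _)
    (hνg.posSemidef (IsSymm.ext fun i j => hL _ _) fun i => hL₀ _) hKL hs
  have hrf : Measurable fun (ω : I → ℝ) i => ω (f i) := by fun_prop
  have hrg : Measurable fun (ω : J → ℝ) i => ω (g i) := by fun_prop
  have : IsProbabilityMeasure (W.map Prod.fst) := hWfst ▸ hμf.1
  have : IsProbabilityMeasure W := Measure.isProbabilityMeasure_of_map Prod.fst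
  obtain ⟨Q, hQfst, hQsnd, hQ⟩ := exists_measure_map_prodMap_eq μ ν hrf hrg W hWfst hWsnd
  refine ⟨Q, hQfst, hQsnd, fun ε hε => ?_⟩
  have hQi : ∀ i, Q {q | ε < |q.1 (f i) - q.2 (g i)|} ≤
      ENNReal.ofReal (2 * Real.exp (-(ε ^ 2 / (2 * s)))) := fun i => by
    have hWi := hW ε hε i
    rwa [← hQ, Measure.map_apply (hrf.prodMap hrg)
      (measurableSet_lt (by fun_prop) (by fun_prop))] at hWi
  calc Q {q | ∃ i, ε < |q.1 (f i) - q.2 (g i)|}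
      ≤ ∑ i, Q {q | ε < |q.1 (f i) - q.2 (g i)|} := by
        rw [ofPred_exists]
        exact measure_iUnion_fintype_le _ _
    _ ≤ ∑ _ : ι, ENNReal.ofReal (2 * Real.exp (-(ε ^ 2 / (2 * s)))) :=
        Finset.sum_le_sum fun i _ => hQi i
    _ = ENNReal.ofReal (2 * Fintype.card ι * Real.exp (-(ε ^ 2 / (2 * s)))) := by
        rw [Finset.sum_const, nsmul_eq_mul, Finset.card_univ, mul_comm 2 (Fintype.card ι : ℝ),
          mul_assoc, ENNReal.ofReal_mul (Nat.cast_nonneg _), ENNReal.ofReal_natCast]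

end Coupling

/-! ### Coupling on unions of balls -/

section Asymptotics

variable {d : ℕ} {α β x : ℝ}

lemma tendsto_pow_add_sqrt (hx₀ : 0 ≤ x) (hx : x < 1) (c : ℝ) :
    Tendsto (fun M : ℕ => 2 * x ^ M + 3 * (M * x ^ M) + c * √(2 * (M * x ^ M) + x ^ M)) atTop
      (nhds 0) := by
  have hpow : Tendsto (fun M : ℕ => x ^ M) atTop (nhds 0) :=
    tendsto_pow_atTop_nhds_zero_of_lt_one hx₀ hx
  have hmul : Tendsto (fun M : ℕ => (M : ℝ) * x ^ M) atTop (nhds 0) :=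
    tendsto_self_mul_const_pow_of_lt_one hx₀ hx
  simpa using ((hpow.const_mul 2).add (hmul.const_mul 3)).add
    (((hmul.const_mul 2).add hpow).sqrt.const_mul c)

/-- With `b = √x`, one factor `b ^ M` of `x ^ M` beats the polynomials in `M`, and what remains is
at most `x ^ R`, even after the square root, because `M ≤ 2 * (M - 2 * R)`. -/
lemma eventually_pow_add_sqrt_le (hx₀ : 0 < x) (hx : x < 1) {c : ℝ} (hc : 0 ≤ c) :
    ∀ᶠ M : ℕ in atTop, ∀ R, 6 * R ≤ M →
      2 * x ^ M + 3 * M * x ^ M + c * √((2 * M + 1) * x ^ M) ≤ 1 / 2 * x ^ R := by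
  obtain ⟨b, hb₀, rfl⟩ : ∃ b, 0 < b ∧ x = b ^ 2 :=
    ⟨√x, Real.sqrt_pos.mpr hx₀, (Real.sq_sqrt hx₀.le).symm⟩
  have hb : b < 1 := (sq_lt_one_iff₀ hb₀.le).mp hx
  filter_upwards [(tendsto_pow_add_sqrt hb₀.le hb c).eventually
    (gt_mem_nhds (by norm_num : (0 : ℝ) < 1 / 2))] with M hM R hR
  have hpow : (b ^ 2) ^ M ≤ (b ^ 2) ^ R * b ^ M := by
    rw [← pow_mul, ← pow_mul, ← pow_add]
    exact pow_le_pow_of_le_one hb₀.le hb.le (by omega)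
  have hpow_sq : (b ^ 2) ^ M ≤ ((b ^ 2) ^ R) ^ 2 * b ^ M := by
    rw [← pow_mul, ← pow_mul, ← pow_mul, ← pow_add]
    exact pow_le_pow_of_le_one hb₀.le hb.le (by omega)
  have hsqrt : √((2 * M + 1) * (b ^ 2) ^ M) ≤ (b ^ 2) ^ R * √(2 * (M * b ^ M) + b ^ M) := by
    rw [Real.sqrt_le_left (by positivity), mul_pow, Real.sq_sqrt (by positivity)]
    calc (2 * M + 1) * (b ^ 2) ^ M ≤ (2 * M + 1) * (((b ^ 2) ^ R) ^ 2 * b ^ M) := by gcongr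
      _ = ((b ^ 2) ^ R) ^ 2 * (2 * (M * b ^ M) + b ^ M) := by ring
  calc 2 * (b ^ 2) ^ M + 3 * M * (b ^ 2) ^ M + c * √((2 * M + 1) * (b ^ 2) ^ M)
      ≤ 2 * ((b ^ 2) ^ R * b ^ M) + 3 * M * ((b ^ 2) ^ R * b ^ M) +
          c * ((b ^ 2) ^ R * √(2 * (M * b ^ M) + b ^ M)) := by gcongr
    _ = (b ^ 2) ^ R * (2 * b ^ M + 3 * (M * b ^ M) + c * √(2 * (M * b ^ M) + b ^ M)) := by ring
    _ ≤ (b ^ 2) ^ R * (1 / 2) := by gcongr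
    _ = 1 / 2 * (b ^ 2) ^ R := mul_comm _ _

lemma mul_inv_pow_le {q : ℝ} (hq : 2 ≤ q) {R : ℕ} (hR : 2 ≤ R) :
    4 * (4 * (R : ℝ) + 3) * q⁻¹ ^ (R + 1) ≤ 11 / 2 := by
  have htwo : 8 * (4 * (R : ℝ) + 3) ≤ 11 * 2 ^ (R + 1) := by
    induction R, hR using Nat.le_induction with
    | base => norm_num
    | succ R hR ih =>
      have : (2 : ℝ) ≤ R := mod_cast hR
      rw [pow_succ]
      push_cast
      linarith
  have hpow : (2 : ℝ) ^ (R + 1) ≤ q ^ (R + 1) := by gcongr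
  rw [inv_pow, ← div_eq_mul_inv, div_le_iff₀ (by positivity)]
  linarith

lemma greenError_le (hd : 3 ≤ d) {N M r R : ℕ} (hr : 1 ≤ r) (hrR : r < R)
    (hMN : ((d : ℝ) - 1) ^ (M + 1) ≤ N)
    (hM : 2 * ((d : ℝ) - 1)⁻¹ ^ (M + 1) + 3 * (M + 1 : ℕ) * ((d : ℝ) - 1)⁻¹ ^ (M + 1) +
      1 / β * √((2 * (M + 1 : ℕ) + 1) * ((d : ℝ) - 1)⁻¹ ^ (M + 1)) ≤
        1 / 2 * ((d : ℝ) - 1)⁻¹ ^ R) :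
    greenError d β N M (2 * R + 1 - r) ≤ 6 * ((d : ℝ) - 1)⁻¹ ^ (R - r) := by
  have hq : 2 ≤ (d : ℝ) - 1 := by
    have : (3 : ℝ) ≤ d := mod_cast hd
    linarith
  rw [greenError]
  set q : ℝ := (d : ℝ) - 1
  have : 0 < q := by linarith
  have hr₁ : (1 : ℝ) ≤ r := mod_cast hr
  have hcast : ((2 * R + 1 - r : ℕ) : ℝ) = 2 * (R : ℝ) + 1 - r := by
    rw [Nat.cast_sub (by omega)]
    push_cast
    ring
  have hvolume : 3 * ((M : ℝ) + 1) / N ≤ 3 * (M + 1 : ℕ) * q⁻¹ ^ (M + 1) := by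
    rw [div_eq_mul_inv, inv_pow]
    push_cast
    gcongr
  have hlifts : 4 * (2 * (2 * (R : ℝ) + 1 - r) + 3) * q⁻¹ ^ (2 * R + 1 - r) ≤
      11 / 2 * q⁻¹ ^ (R - r) := by
    rw [show 2 * R + 1 - r = R + 1 + (R - r) by omega, pow_add, ← mul_assoc]
    gcongr
    exact (mul_le_mul_of_nonneg_right (by linarith) (by positivity)).trans
      (mul_inv_pow_le hq (by omega : 2 ≤ R))
  have hradius : q⁻¹ ^ R ≤ q⁻¹ ^ (R - r) :=
    pow_le_pow_of_le_one (by positivity) (inv_le_one_of_one_le₀ (by linarith)) (by omega)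
  rw [hcast, show 2 * (M : ℝ) + 3 = 2 * (M + 1 : ℕ) + 1 by push_cast; ring]
  linarith

lemma pow_floor_mul_logb_le {q y : ℝ} (hq : 1 < q) (hα₀ : 0 ≤ α) (hα : α ≤ 1) (hy : 1 ≤ y) :
    q ^ ⌊α * Real.logb q y⌋₊ ≤ y := by
  have hlog : 0 ≤ Real.logb q y := Real.logb_nonneg hq hy
  calc q ^ ⌊α * Real.logb q y⌋₊ = q ^ ((⌊α * Real.logb q y⌋₊ : ℕ) : ℝ) :=
        (Real.rpow_natCast _ _).symm
    _ ≤ q ^ Real.logb q y := Real.rpow_le_rpow_of_exponent_le hq.le <|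
        (Nat.floor_le (mul_nonneg hα₀ hlog)).trans (mul_le_of_le_one_left hlog hα)
    _ = y := Real.rpow_logb (by linarith) hq.ne' (by linarith)

lemma six_mul_le_floor_mul {R : ℕ} {l : ℝ} (hd : 3 ≤ d) (hα : 0 ≤ α) (hβ : β ≤ 2) (hl : 0 ≤ l)
    (hR : (R : ℝ) ≤ c0 d α β / 6 * l) : 6 * R ≤ ⌊α * l⌋₊ := by
  have hd₃ : (3 : ℝ) ≤ d := mod_cast hd
  have hc : c0 d α β ≤ α := by
    rw [c0, div_le_iff₀ (by linarith)]
    exact mul_le_mul_of_nonneg_left (by linarith) hα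
  refine Nat.le_floor ?_
  push_cast
  linarith [mul_le_mul_of_nonneg_right hc hl]

/-- Where the condition `R ≤ c₀ / 6 * log N` enters: it makes the error at the locality radius
`⌊α * log N⌋` negligible against the fluctuations `(d - 1) ^ (-(R - r))`. -/
lemma exists_forall_greenError_le (hd : 3 ≤ d) (hα : 0 < α ∧ α ≤ 1) (hβ : 0 < β ∧ β ≤ 2) :
    ∃ n₀ : ℕ, ∀ N ≥ n₀, ∃ M, ⌊α * Real.logb ((d : ℝ) - 1) N⌋₊ = M + 1 ∧
      ∀ r R : ℕ, 1 ≤ r → r < R → (R : ℝ) ≤ c0 d α β / 6 * Real.logb ((d : ℝ) - 1) N →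
        greenError d β N M (2 * R + 1 - r) ≤ 6 * ((d : ℝ) - 1)⁻¹ ^ (R - r) := by
  have hq : 1 < (d : ℝ) - 1 := by
    have : (3 : ℝ) ≤ d := mod_cast hd
    linarith
  have hfloor : Tendsto (fun N : ℕ => ⌊α * Real.logb ((d : ℝ) - 1) N⌋₊) atTop atTop :=
    tendsto_nat_floor_atTop.comp <|
      ((Real.tendsto_logb_atTop hq).comp tendsto_natCast_atTop_atTop).const_mul_atTop hα.1
  have hsmall := eventually_pow_add_sqrt_le (inv_pos.mpr (by linarith)) (inv_lt_one_of_one_lt₀ hq)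
    (one_div_nonneg.mpr hβ.1.le)
  obtain ⟨n₀, hn₀⟩ := eventually_atTop.mp <| (hfloor.eventually hsmall).and <|
    (hfloor.eventually (eventually_ge_atTop 1)).and (eventually_ge_atTop 1)
  refine ⟨n₀, fun N hN => ?_⟩
  obtain ⟨herror, hfloor_pos, hN₁⟩ := hn₀ N hN
  have hN₁ : (1 : ℝ) ≤ N := mod_cast hN₁
  have hpow := pow_floor_mul_logb_le hq hα.1.le hα.2 hN₁
  obtain ⟨M, hM⟩ := Nat.exists_eq_add_of_le' hfloor_pos
  refine ⟨M, hM, fun r R hr hrR hR => ?_⟩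
  have h6R := six_mul_le_floor_mul hd hα.1.le hβ.2 (Real.logb_nonneg hq hN₁) hR
  rw [hM] at herror hpow h6R
  exact greenError_le hd hr hrR hpow (herror R h6R)

end Asymptotics

section TreeBalls

variable {T : Type*} {Gt : SimpleGraph T} [Gt.LocallyFinite] {d : ℕ}

lemma sub_two_mul_sum_card_sphere (hGt : Gt.IsTree) (hreg : Gt.IsRegularOfDegree d) (z : T)
    (r : ℕ) : ((d : ℝ) - 2) * ∑ k ∈ Finset.range (r + 1), ((sphere Gt z k).card : ℝ) =
      d * ((d : ℝ) - 1) ^ r - 2 := by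
  induction r with
  | zero => simp [sphere]
  | succ r ih =>
    rw [Finset.sum_range_succ, mul_add, ih, card_sphere_succ hGt hreg]
    ring

lemma exists_finset_eq_sball (hGt : Gt.IsTree) (hreg : Gt.IsRegularOfDegree d) (hd : 2 ≤ d)
    (C : Finset T) (r : ℕ) :
    ∃ B : Finset T, ↑B = sball Gt C r ∧
      ((d : ℝ) - 2) * B.card ≤ C.card * (d * ((d : ℝ) - 1) ^ r) := by
  refine ⟨C.biUnion fun z => (Finset.range (r + 1)).biUnion (sphere Gt z), ?_, ?_⟩
  · ext y
    simp only [Finset.coe_biUnion, mem_iUnion, Finset.mem_coe, Finset.mem_range,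
      mem_sphere hGt.connected, Nat.lt_succ_iff, exists_prop]
    exact ⟨fun ⟨c, hc, _, hk, h⟩ => ⟨c, hc, h.trans_le hk⟩, fun ⟨c, hc, h⟩ => ⟨c, hc, _, h, rfl⟩⟩
  · have hd₂ : 0 ≤ (d : ℝ) - 2 := sub_nonneg.mpr (mod_cast hd)
    have hcard : ((C.biUnion fun z => (Finset.range (r + 1)).biUnion (sphere Gt z)).card : ℝ) ≤
        ∑ z ∈ C, ∑ k ∈ Finset.range (r + 1), ((sphere Gt z k).card : ℝ) := mod_cast
      Finset.card_biUnion_le.trans (Finset.sum_le_sum fun _ _ => Finset.card_biUnion_le)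
    refine (mul_le_mul_of_nonneg_left hcard hd₂).trans ?_
    rw [Finset.mul_sum]
    simp_rw [sub_two_mul_sum_card_sphere hGt hreg, Finset.sum_const, nsmul_eq_mul]
    gcongr
    linarith

end TreeBalls

section FieldCoupling

variable {V T : Type*} [Fintype V] {G : SimpleGraph V} {Gt : SimpleGraph T} {π : T → V}
  {d k r R M : ℕ} {β : ℝ}

lemma abs_zGreen_sub_treeGreen_le_of_injOn [Gt.LocallyFinite] (hgap : SpectralGapLB G d β)
    (hβ : 0 < β) (hd : 3 ≤ d) (hreg : IsReg G d) (hG : G.Connected) (hGt : IsRegTree Gt d)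
    (hπ : IsCovering Gt G π)
    (hcyc : ∀ x, adjPairs G (gball G x (M + 1)) ≤ 2 * (gball G x (M + 1)).ncard)
    {C : Set T} {L : ℕ} (hinj : InjOn π (sball Gt C L)) (hrL : r ≤ L) {w z : T}
    (hw : w ∈ sball Gt C r) (hz : z ∈ sball Gt C r) :
    |zGreen G d (Nat.card V) (π w) (π z) - treeGreen Gt d w z| ≤
      greenError d β (Nat.card V) M (L + 1 - r) := by
  refine abs_zGreen_sub_treeGreen_le hgap hβ hd hreg hG hGt hπ (hcyc _) fun z' hz' hne => ?_
  by_contra hlt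
  obtain ⟨c, hc, hcw⟩ := hw
  obtain ⟨c', hc', hcz⟩ := hz
  have htri : Gt.dist c' z' ≤ Gt.dist c' z + Gt.dist z z' := hGt.1.dist_triangle
  exact hne (hinj ⟨c', hc', by omega⟩ ⟨c, hc, hcw.trans hrL⟩ hz')

/-- A bound for the variances of the differences of the two fields, coupled on `k` balls of radius
`r` in such a way that their covariances differ by at most `6 * (d - 1) ^ (-(R - r))`. -/
noncomputable def couplingVariance (d k r R : ℕ) : ℝ :=
  6 * k * (d : ℝ) ^ 2 / (((d : ℝ) - 1) * ((d : ℝ) - 2)) * (((d : ℝ) - 1) ^ ((R : ℤ) - 2 * r))⁻¹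

lemma mul_inv_pow_le_couplingVariance (hd : 3 ≤ d) (hrR : r ≤ R) {n : ℝ}
    (hn : ((d : ℝ) - 2) * n ≤ k * (d * ((d : ℝ) - 1) ^ r)) :
    n * (6 * ((d : ℝ) - 1)⁻¹ ^ (R - r)) ≤ couplingVariance d k r R := by
  have hd₃ : (3 : ℝ) ≤ d := mod_cast hd
  have hq : 0 < (d : ℝ) - 1 := by linarith
  have hd₂ : 0 < (d : ℝ) - 2 := by linarith
  have hpow : ((d : ℝ) - 1) ^ r * ((d : ℝ) - 1)⁻¹ ^ (R - r) =
      (((d : ℝ) - 1) ^ ((R : ℤ) - 2 * r))⁻¹ := by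
    rw [← zpow_natCast, ← zpow_natCast, inv_zpow', ← zpow_add₀ hq.ne', ← zpow_neg,
      Nat.cast_sub hrR]
    congr 1
    ring
  have hn : n ≤ k * (d * ((d : ℝ) - 1) ^ r) / ((d : ℝ) - 2) := by
    rwa [le_div_iff₀ hd₂, mul_comm]
  rw [couplingVariance, ← hpow]
  calc n * (6 * ((d : ℝ) - 1)⁻¹ ^ (R - r))
      ≤ k * (d * ((d : ℝ) - 1) ^ r) / ((d : ℝ) - 2) * (6 * ((d : ℝ) - 1)⁻¹ ^ (R - r)) := by gcongr
    _ = 6 * k * (d * ((d : ℝ) - 1)) / (((d : ℝ) - 1) * ((d : ℝ) - 2)) *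
          (((d : ℝ) - 1) ^ r * ((d : ℝ) - 1)⁻¹ ^ (R - r)) := by field_simp
    _ ≤ _ := by
      gcongr
      rw [sq]
      gcongr
      linarith

lemma neg_sq_div_couplingVariance (hd : 3 ≤ d) (hk : 0 < k) (r R : ℕ) (ε : ℝ) :
    -(ε ^ 2 / (2 * couplingVariance d k r R)) =
      -(ε ^ 2 * ((d : ℝ) - 1) * ((d : ℝ) - 2) / (12 * k * (d : ℝ) ^ 2)) *
        ((d : ℝ) - 1) ^ ((R : ℤ) - 2 * r) := by
  have hd₃ : (3 : ℝ) ≤ d := mod_cast hd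
  have hq : (d : ℝ) - 1 ≠ 0 := by linarith
  have hd₂ : (d : ℝ) - 2 ≠ 0 := by linarith
  have hpow := zpow_ne_zero ((R : ℤ) - 2 * r) hq
  rw [couplingVariance]
  generalize ((d : ℝ) - 1) ^ ((R : ℤ) - 2 * r) = x at hpow ⊢
  field_simp
  ring

theorem exists_coupling_sball (hgap : SpectralGapLB G d β) (hβ : 0 < β) (hd : 3 ≤ d)
    (hreg : IsReg G d) (hG : G.Connected) (hGt : IsRegTree Gt d) (hπ : IsCovering Gt G π)
    (hcyc : ∀ x, adjPairs G (gball G x (M + 1)) ≤ 2 * (gball G x (M + 1)).ncard)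
    (herror : greenError d β (Nat.card V) M (2 * R + 1 - r) ≤ 6 * ((d : ℝ) - 1)⁻¹ ^ (R - r))
    {μ : Measure (V → ℝ)} (hμ : IsGaussianField μ (zGreen G d (Nat.card V)))
    {μT : Measure (T → ℝ)} (hμT : IsGaussianField μT (treeGreen Gt d))
    {C : Finset T} (hC : C.card ≤ k) (hk : 0 < k) (hrR : r ≤ R)
    (hinj : InjOn π (sball Gt C (2 * R))) :
    ∃ Q : Measure ((V → ℝ) × (T → ℝ)), Q.map Prod.fst = μ ∧ Q.map Prod.snd = μT ∧
      ∀ ε, 0 ≤ ε → Q {q | ∃ z ∈ sball Gt C r, ε < |q.1 (π z) - q.2 z|} ≤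
        ENNReal.ofReal (2 * k * d * ((d : ℝ) - 1) ^ r *
          Real.exp (-(ε ^ 2 * ((d : ℝ) - 1) * ((d : ℝ) - 2) / (12 * k * (d : ℝ) ^ 2)) *
            ((d : ℝ) - 1) ^ ((R : ℤ) - 2 * r))) := by
  have hd₃ : (3 : ℝ) ≤ d := mod_cast hd
  have hd₀ : d ≠ 0 := by omega
  have := hGt.2.2.finite_neighborSet hd₀
  let _ : Gt.LocallyFinite := fun z => Fintype.ofFinite _
  obtain ⟨B, hB, hBcard⟩ := exists_finset_eq_sball ⟨hGt.1, hGt.2.1⟩ hGt.2.2.isRegularOfDegree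
    (by omega : 2 ≤ d) C r
  replace hBcard : ((d : ℝ) - 2) * B.card ≤ k * (d * ((d : ℝ) - 1) ^ r) :=
    hBcard.trans (mul_le_mul_of_nonneg_right (mod_cast hC)
      (mul_nonneg d.cast_nonneg (pow_nonneg (by linarith) r)))
  have hsub : (B : Set T) ⊆ sball Gt C (2 * R) := fun z hz => by
    obtain ⟨c, hc, hcz⟩ := hB.subset hz
    exact ⟨c, hc, by omega⟩
  have hcardB : Fintype.card (B : Set T) = B.card := Fintype.card_coe B
  have htree : 0 ≤ ((d : ℝ) - 1) / ((d : ℝ) - 2) := (sub_one_div_sub_two_mem_Icc hd).1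
  obtain ⟨Q, hQfst, hQsnd, hQ⟩ := hμ.exists_coupling hμT (zGreen_comm hgap hβ hreg hd₀ hG)
    (zGreen_self_nonneg hgap hβ hreg hd₀ hG) (fun w z => by rw [treeGreen, Gt.dist_comm, treeGreen])
    (fun z => mul_nonneg htree (pow_nonneg (inv_nonneg.mpr (by linarith)) _))
    (hinj.mono hsub).injective Subtype.val_injective
    (fun w z : B => (abs_zGreen_sub_treeGreen_le_of_injOn hgap hβ hd hreg hG hGt hπ hcyc hinj
      (by omega) (hB.subset w.2) (hB.subset z.2)).trans herror)
    (hcardB ▸ mul_inv_pow_le_couplingVariance hd hrR hBcard)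
  refine ⟨Q, hQfst, hQsnd, fun ε hε => ?_⟩
  have hcard : (B.card : ℝ) ≤ k * (d * ((d : ℝ) - 1) ^ r) :=
    (le_mul_of_one_le_left B.card.cast_nonneg (by linarith)).trans hBcard
  refine le_trans (measure_mono ?_) ((hQ ε hε).trans (ENNReal.ofReal_le_ofReal ?_))
  · exact fun q ⟨z, hz, hzε⟩ => ⟨⟨z, hB.superset hz⟩, hzε⟩
  · rw [neg_sq_div_couplingVariance hd hk, hcardB]
    exact mul_le_mul_of_nonneg_right (by linarith) (Real.exp_pos _).le

end FieldCoupling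

section BallUnions

variable {V : Type*} (G : SimpleGraph V)

lemma encard_pair_le (x y : V) : ({x, y} : Set V).encard ≤ 2 :=
  (encard_insert_le {y} x).trans_eq (by rw [encard_singleton, one_add_one_eq_two])

lemma sball_singleton (x : V) (r : ℕ) : sball G {x} r = gball G x r := by
  simp only [sball, gball, mem_singleton_iff, exists_eq_left]

lemma sball_pair (x y : V) (r : ℕ) : sball G {x, y} r = gball G x r ∪ gball G y r := by
  simp only [sball, gball, mem_insert_iff, mem_singleton_iff, exists_eq_or_imp, exists_eq_left,
    ofPred_or]

end BallUnions

end GFF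

open GFF in
theorem gff_local_approximation_coupling_general {d : ℕ} (hd : 3 ≤ d) {α β : ℝ}
    (hα : 0 < α ∧ α ≤ 1) (hβ : 0 < β ∧ β ≤ 2) :
    ∃ n₀ : ℕ, ∀ ⦃V : Type*⦄ [Fintype V] ⦃G : SimpleGraph V⦄, n₀ ≤ Nat.card V → G.Connected →
      IsReg G d → SpectralGapLB G d β →
      (∀ x, adjPairs G (gball G x ⌊α * Real.logb ((d : ℝ) - 1) (Nat.card V)⌋₊) ≤
        2 * (gball G x ⌊α * Real.logb ((d : ℝ) - 1) (Nat.card V)⌋₊).ncard) →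
      ∀ ⦃μ : Measure (V → ℝ)⦄, IsGaussianField μ (zGreen G d (Nat.card V)) →
      ∀ ⦃T : Type*⦄ ⦃Gt : SimpleGraph T⦄, IsRegTree Gt d →
      ∀ ⦃μT : Measure (T → ℝ)⦄, IsGaussianField μT (treeGreen Gt d) →
      ∀ ⦃π : T → V⦄, IsCovering Gt G π →
      ∀ ⦃r R : ℕ⦄, 1 ≤ r → r < R →
      (R : ℝ) ≤ c0 d α β / 6 * Real.logb ((d : ℝ) - 1) (Nat.card V) →
      ∀ ⦃C : Set T⦄ ⦃k : ℕ⦄, C.encard ≤ k → 0 < k →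
      ∀ ⦃ρ : V → T⦄, LeftInvOn ρ π (sball Gt C (2 * R)) →
      ∃ Q : Measure ((V → ℝ) × (T → ℝ)), Q.map Prod.fst = μ ∧ Q.map Prod.snd = μT ∧
        ∀ ε, 0 ≤ ε → Q {q | ∃ y ∈ sball G (π '' C) r, ε < |q.1 y - q.2 (ρ y)|} ≤
          ENNReal.ofReal (2 * k * d * ((d : ℝ) - 1) ^ r *
            Real.exp (-(ε ^ 2 * ((d : ℝ) - 1) * ((d : ℝ) - 2) / (12 * k * (d : ℝ) ^ 2)) *
              ((d : ℝ) - 1) ^ ((R : ℤ) - 2 * r))) := by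
  obtain ⟨n₀, hn₀⟩ := exists_forall_greenError_le hd hα hβ
  refine ⟨n₀, fun V _ G hV hG hreg hgap hcyc μ hμ T Gt hGt μT hμT π hπ r R hr hrR hR C k hC hk
    ρ hρ => ?_⟩
  obtain ⟨M, hM, herror⟩ := hn₀ _ hV
  rw [hM] at hcyc
  obtain ⟨C, rfl⟩ := (finite_of_encard_le_coe hC).exists_finset_coe
  rw [encard_coe_eq_coe_finsetCard, Nat.cast_le] at hC
  obtain ⟨Q, hQfst, hQsnd, hQ⟩ := exists_coupling_sball hgap hβ.1 hd hreg hG hGt hπ hcyc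
    (herror r R hr hrR hR) hμ hμT hC hk hrR.le hρ.injOn
  refine ⟨Q, hQfst, hQsnd, fun ε hε => (measure_mono ?_).trans (hQ ε hε)⟩
  rintro q ⟨y, ⟨-, ⟨c, hc, rfl⟩, hcy⟩, hε⟩
  obtain ⟨z, rfl, hcz⟩ := hπ.exists_lift_dist_le hG c y
  have hz : Gt.dist c z ≤ r := hcz.trans hcy
  rw [hρ ⟨c, hc, by omega⟩] at hε
  exact ⟨z, ⟨c, hc, hz⟩, hε⟩

/-- local approximation of the zero-average GFF by the tree GFF on
tree-like neighbourhoods, with a quantitative coupling bound. -/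
theorem gff_local_approximation_coupling
    (d : ℕ) (hd : 3 ≤ d)
    (V : ℕ → Type) [∀ n, Fintype (V n)]
    (G : ∀ n, SimpleGraph (V n)) (N : ℕ → ℕ) (α β : ℝ)
    (hα : 0 < α ∧ α ≤ 1) (hβ : 0 < β ∧ β ≤ 2)
    (hNmono : StrictMono N) (hNpos : ∀ n, 1 ≤ N n)
    (hcard : ∀ n, Nat.card (V n) = N n)
    (hconn : ∀ n, (G n).Connected)
    (hreg : ∀ n, GFF.IsReg (G n) d)
    (hcyc : ∀ n (x : V n),
      GFF.adjPairs (G n) (GFF.gball (G n) x ⌊α * Real.logb ((d : ℝ) - 1) (N n : ℝ)⌋₊) ≤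
        2 * (GFF.gball (G n) x ⌊α * Real.logb ((d : ℝ) - 1) (N n : ℝ)⌋₊).ncard)
    (hgap : ∀ n, GFF.SpectralGapLB (G n) d β)
    (μ : ∀ n, Measure (V n → ℝ))
    (hμ : ∀ n, GFF.IsGaussianField (μ n) (GFF.zGreen (G n) d (N n)))
    (T : Type) (Gt : SimpleGraph T) (o : T) (htree : GFF.IsRegTree Gt d)
    (μT : Measure (T → ℝ)) (hμT : GFF.IsGaussianField μT (GFF.treeGreen Gt d)) :
    ∃ n₀ : ℕ, ∀ n ≥ n₀,
      (∀ (x x' : V n) (π : T → V n), GFF.IsCoverMap Gt (G n) o x π →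
        ∀ r R : ℕ, 1 ≤ r → r < R →
        (R : ℝ) ≤ GFF.c0 d α β / 6 * Real.logb ((d : ℝ) - 1) (N n : ℝ) →
        GFF.TxZero (G n) (GFF.gball (G n) x (2 * R)) →
        GFF.TxZero (G n) (GFF.gball (G n) x' (2 * R)) →
        GFF.gball (G n) x (2 * R) ∩ GFF.gball (G n) x' (2 * R) = ∅ →
        ∀ z' : T, π z' = x' →
        ∀ ρ : V n → T,
          (∀ z ∈ GFF.gball Gt o (2 * R) ∪ GFF.gball Gt z' (2 * R), ρ (π z) = z) →
          (∀ v ∈ GFF.gball (G n) x (2 * R) ∪ GFF.gball (G n) x' (2 * R),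
            π (ρ v) = v ∧ ρ v ∈ GFF.gball Gt o (2 * R) ∪ GFF.gball Gt z' (2 * R)) →
        ∃ Q : Measure ((V n → ℝ) × (T → ℝ)),
          Q.map Prod.fst = μ n ∧ Q.map Prod.snd = μT ∧
          ∀ ε : ℝ, 0 < ε →
            Q {q | ∃ y ∈ GFF.gball (G n) x r ∪ GFF.gball (G n) x' r,
                ε < |q.1 y - q.2 (ρ y)|} ≤
              ENNReal.ofReal (8 * d * ((d : ℝ) - 1) ^ r *
                Real.exp (-(ε ^ 2 * ((d : ℝ) - 1) * ((d : ℝ) - 2) / (24 * (d : ℝ) ^ 2)) *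
                  ((d : ℝ) - 1) ^ ((R : ℤ) - 2 * (r : ℤ)))) ) ∧
      (∀ (x : V n) (π : T → V n), GFF.IsCoverMap Gt (G n) o x π →
        ∀ r R : ℕ, 1 ≤ r → r < R →
        (R : ℝ) ≤ GFF.c0 d α β / 6 * Real.logb ((d : ℝ) - 1) (N n : ℝ) →
        GFF.TxZero (G n) (GFF.gball (G n) x (2 * R)) →
        ∀ ρ : V n → T,
          (∀ z ∈ GFF.gball Gt o (2 * R), ρ (π z) = z) →
          (∀ v ∈ GFF.gball (G n) x (2 * R), π (ρ v) = v ∧ ρ v ∈ GFF.gball Gt o (2 * R)) →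
        ∃ Q : Measure ((V n → ℝ) × (T → ℝ)),
          Q.map Prod.fst = μ n ∧ Q.map Prod.snd = μT ∧
          ∀ ε : ℝ, 0 < ε →
            Q {q | ∃ y ∈ GFF.gball (G n) x r, ε < |q.1 y - q.2 (ρ y)|} ≤
              ENNReal.ofReal (8 * d * ((d : ℝ) - 1) ^ r *
                Real.exp (-(ε ^ 2 * ((d : ℝ) - 1) * ((d : ℝ) - 2) / (24 * (d : ℝ) ^ 2)) *
                  ((d : ℝ) - 1) ^ ((R : ℤ) - 2 * (r : ℤ)))) ) := by
  obtain ⟨n₀, hn₀⟩ := gff_local_approximation_coupling_general hd hα hβ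
  have hq : 0 ≤ (d : ℝ) - 1 := sub_nonneg.mpr (mod_cast (by omega : 1 ≤ d))
  have htwo : (12 : ℝ) * (2 : ℕ) = 24 := by norm_num
  obtain rfl : (fun n => Nat.card (V n)) = N := funext hcard
  refine ⟨n₀, fun n hn => ?_⟩
  have hcoupling := hn₀ (hn.trans hNmono.le_apply) (hconn n) (hreg n) (hgap n) (hcyc n) (hμ n)
    htree hμT
  refine ⟨fun x x' π hπ r R hr hrR hR _ _ _ z' hz' ρ hρ _ => ?_,
    fun x π hπ r R hr hrR hR _ ρ hρ _ => ?_⟩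
  · rw [← GFF.sball_pair] at hρ ⊢
    obtain ⟨Q, hQfst, hQsnd, hQ⟩ := hcoupling hπ.2.2 hr hrR hR (k := 2)
      (GFF.encard_pair_le o z') two_pos hρ
    rw [image_pair, hπ.1, hz', htwo] at hQ
    refine ⟨Q, hQfst, hQsnd, fun ε hε => (hQ ε hε.le).trans (ENNReal.ofReal_le_ofReal ?_)⟩
    gcongr
    norm_num
  · rw [← GFF.sball_singleton] at hρ ⊢
    obtain ⟨Q, hQfst, hQsnd, hQ⟩ := hcoupling hπ.2.2 hr hrR hR (k := 2)
      ((encard_singleton o).trans_le one_le_two) two_pos hρ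
    rw [image_singleton, hπ.1, htwo] at hQ
    refine ⟨Q, hQfst, hQsnd, fun ε hε => (hQ ε hε.le).trans (ENNReal.ofReal_le_ofReal ?_)⟩
    gcongr
    norm_num
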